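/- arXiv:2309.03782 — 3 statements merged into one kernel-verified Lean document; each statement's English description precedes it below -/
import Mathlib

section
/- (Corollary 1) Under the hypotheses of Theorem 2 (Q has a unique minimum at (γ₀,g₀), and (γ̂_n, ĝ_n) are random elements of Γ×𝒢 that almost surely minimize Q_n over Γ×𝒢 for every n), sup_{t∈[0,A]} |log ĝ_n(t) − log g₀(t)| converges to 0 with probability 1 as n→∞. -/
open MeasureTheory ProbabilityTheory Filter Set Topology

/-- The class 𝒢 of nonincreasing, `[m,M]`-valued, `L`-Lipschitz continuous functions
on `[0,A]`. -/
def inG (A m M L : ℝ) (g : ℝ → ℝ) : Prop :=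
  ContinuousOn g (Set.Icc 0 A) ∧ AntitoneOn g (Set.Icc 0 A) ∧
  (∀ t ∈ Set.Icc (0 : ℝ) A, g t ∈ Set.Icc m M) ∧
  LipschitzOnWith (Real.toNNReal L) g (Set.Icc 0 A)

/-- The limiting criterion `Q(γ, g)`. -/
noncomputable def Qlim (Δ γ₀ : ℝ) (x z g₀ : ℝ → ℝ) (γ : ℝ) (g : ℝ → ℝ) : ℝ :=
  (1 / Δ) * ∫ w in (0 : ℝ)..Δ,
    (Real.log (1 + γ₀ * x w) - Real.log (1 + γ * x w) +
      Real.log (g₀ (z w)) - Real.log (g (z w))) ^ 2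

/-- The empirical average squared error loss `Q_n(γ, g)(ω)`, where the observations are
`yᵢ = log(1+γ₀xᵢ) + log g₀(zᵢ) + εᵢ` with `xᵢ = x(iΔ/n)`, `zᵢ = z(iΔ/n)`. -/
noncomputable def Qemp {Ω : Type*} (Δ γ₀ : ℝ) (x z g₀ : ℝ → ℝ) (ε : ℤ → Ω → ℝ)
    (n : ℕ) (γ : ℝ) (g : ℝ → ℝ) (ω : Ω) : ℝ :=
  (1 / (n : ℝ)) * ∑ i ∈ Finset.Icc 1 n,
    ((Real.log (1 + γ₀ * x ((i : ℝ) * Δ / n)) + Real.log (g₀ (z ((i : ℝ) * Δ / n))) +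
        ε (i : ℤ) ω)
      - Real.log (1 + γ * x ((i : ℝ) * Δ / n)) - Real.log (g (z ((i : ℝ) * Δ / n)))) ^ 2

/-!
Comparing the estimator with the truth in the least-squares criterion gives the basic inequality
`‖f̂ₙ - f₀‖ₙ² ≤ 2 ⟨ε, f̂ₙ - f₀⟩ₙ` between empirical averages over the design points. For a fixed
Lipschitz function `h`, summation by parts shows that `⟨ε, h⟩ₙ → 0` as soon as the running means of
the noise vanish; since the running means of `|ε|` are bounded, density extends this to all
continuous `h`. Both properties of the noise pass from the i.i.d. innovations, where they are the
strong law of large numbers, through the contracting AR(1) recursion. By Banach–Steinhaus the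
convergence of `⟨ε, ·⟩ₙ`, and of the empirical averages to the integral, may be evaluated along any
convergent family of functions, so each cluster point of the estimators in the compact parameter
space (Arzelà–Ascoli) has `Q = 0` and must be the true parameter.
-/

theorem tendsto_zero_of_succ_le_mul_add {a : ℝ} (ha0 : 0 ≤ a) (ha1 : a < 1) {s f : ℕ → ℝ}
    (hs : ∀ n, 0 ≤ s n) (hf : Tendsto f atTop (𝓝 0)) (hle : ∀ n, s (n + 1) ≤ a * s n + f n) :
    Tendsto s atTop (𝓝 0) := by
  rw [Metric.tendsto_atTop]
  intro δ hδ
  obtain ⟨N, hN⟩ := eventually_atTop.1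
    (hf.eventually_lt_const (u := (1 - a) * (δ / 2)) (mul_pos (by linarith) (half_pos hδ)))
  have geometric_bound : ∀ k, s (N + k) ≤ a ^ k * s N + δ / 2 := by
    intro k
    induction k with
    | zero => simpa using (half_pos hδ).le
    | succ k ih =>
      calc s (N + (k + 1)) ≤ a * s (N + k) + f (N + k) := hle _
        _ ≤ a * (a ^ k * s N + δ / 2) + (1 - a) * (δ / 2) := by
            gcongr
            exact (hN _ (Nat.le_add_right N k)).le
        _ = a ^ (k + 1) * s N + δ / 2 := by ring
  have geometric_tendsto : Tendsto (fun k => a ^ k * s N) atTop (𝓝 0) := by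
    simpa using (tendsto_pow_atTop_nhds_zero_of_lt_one ha0 ha1).mul_const (s N)
  obtain ⟨K, hK⟩ := eventually_atTop.1 (geometric_tendsto.eventually_lt_const (half_pos hδ))
  refine ⟨N + K, fun n hn => ?_⟩
  obtain ⟨k, rfl⟩ := Nat.exists_eq_add_of_le (le_of_add_le_left hn)
  rw [Real.dist_eq, sub_zero, abs_of_nonneg (hs _)]
  linarith [geometric_bound k, hK k (by lia)]

/-- A deterministic noise sequence that is invisible to slowly varying weights: its running means
vanish in the limit, and the running means of its absolute values stay bounded. -/
structure AveragesOut (e : ℕ → ℝ) : Prop where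
  tendsto_mean : Tendsto (fun n : ℕ => (∑ i ∈ Finset.range n, e i) / n) atTop (𝓝 0)
  bddAbove_mean_abs : BddAbove (range fun n : ℕ => (∑ i ∈ Finset.range n, |e i|) / n)

section AutoregressiveFilter

variable {φ : ℝ} {e u : ℕ → ℝ}

theorem sum_abs_succ_le_of_ar1 (hφ : |φ| < 1) (hrec : ∀ n, e (n + 1) = φ * e n + u n) (n : ℕ) :
    ∑ i ∈ Finset.range n, |e (i + 1)| ≤
      (|φ| * |e 0| + ∑ i ∈ Finset.range n, |u i|) / (1 - |φ|) := by
  have weighted_bound : (1 - |φ|) * ∑ i ∈ Finset.range n, |e (i + 1)| + |φ| * |e n| ≤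
      |φ| * |e 0| + ∑ i ∈ Finset.range n, |u i| := by
    induction n with
    | zero => simp
    | succ n ih =>
      have step : |e (n + 1)| ≤ |φ| * |e n| + |u n| := by
        rw [hrec, ← abs_mul]
        exact abs_add_le _ _
      rw [Finset.sum_range_succ, Finset.sum_range_succ]
      linarith
  rw [le_div_iff₀' (by linarith)]
  linarith [mul_nonneg (abs_nonneg φ) (abs_nonneg (e n))]

theorem sum_succ_eq_of_ar1 (hrec : ∀ n, e (n + 1) = φ * e n + u n) (n : ℕ) :
    ∑ i ∈ Finset.range (n + 1), e (i + 1) =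
      φ * ∑ i ∈ Finset.range n, e (i + 1) + (φ * e 0 + ∑ i ∈ Finset.range (n + 1), u i) := by
  simp only [hrec, Finset.sum_add_distrib, ← Finset.mul_sum]
  rw [Finset.sum_range_succ' e]
  simp only [hrec, Finset.sum_add_distrib, ← Finset.mul_sum]
  ring

theorem tendsto_mean_of_ar1 (hφ : |φ| < 1) (hrec : ∀ n, e (n + 1) = φ * e n + u n)
    (hu : Tendsto (fun n : ℕ => (∑ i ∈ Finset.range n, u i) / n) atTop (𝓝 0)) :
    Tendsto (fun n : ℕ => (∑ i ∈ Finset.range n, e (i + 1)) / n) atTop (𝓝 0) := by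
  set E : ℕ → ℝ := fun n => ∑ i ∈ Finset.range n, e (i + 1)
  have forcing_tendsto : Tendsto (fun n : ℕ =>
      |(φ * e 0 + ∑ i ∈ Finset.range (n + 1), u i) / (n + 1 : ℕ)|) atTop (𝓝 0) := by
    have h := (tendsto_const_div_atTop_nhds_zero_nat (φ * e 0)).add hu
    simpa [add_div] using (h.comp (tendsto_add_atTop_nat 1)).abs
  have contraction (n : ℕ) : |E (n + 1) / (n + 1 : ℕ)| ≤ |φ| * |E n / n| +
      |(φ * e 0 + ∑ i ∈ Finset.range (n + 1), u i) / (n + 1 : ℕ)| := by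
    have mean_step : |E n / (n + 1 : ℕ)| ≤ |E n / n| := by
      rcases n.eq_zero_or_pos with rfl | hn
      · simp [E]
      · simp only [abs_div, Nat.abs_cast]
        gcongr
        exact n.le_succ
    calc |E (n + 1) / (n + 1 : ℕ)|
        = |φ * (E n / (n + 1 : ℕ)) +
            (φ * e 0 + ∑ i ∈ Finset.range (n + 1), u i) / (n + 1 : ℕ)| := by
          rw [← mul_div_assoc, ← add_div, ← sum_succ_eq_of_ar1 hrec]
      _ ≤ |φ| * |E n / (n + 1 : ℕ)| +
            |(φ * e 0 + ∑ i ∈ Finset.range (n + 1), u i) / (n + 1 : ℕ)| := by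
          rw [← abs_mul]
          exact abs_add_le _ _
      _ ≤ _ := by gcongr
  exact (tendsto_zero_iff_abs_tendsto_zero _).2 <|
    tendsto_zero_of_succ_le_mul_add (abs_nonneg φ) hφ (fun _ => abs_nonneg _) forcing_tendsto
      contraction

theorem AveragesOut.of_ar1 (hφ : |φ| < 1) (hrec : ∀ n, e (n + 1) = φ * e n + u n)
    (hu : AveragesOut u) : AveragesOut fun n => e (n + 1) where
  tendsto_mean := tendsto_mean_of_ar1 hφ hrec hu.tendsto_mean
  bddAbove_mean_abs := by
    obtain ⟨B, hB⟩ := hu.bddAbove_mean_abs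
    refine ⟨(|φ| * |e 0| + B) / (1 - |φ|), forall_mem_range.2 fun n => ?_⟩
    have initial_le : |φ| * |e 0| / n ≤ |φ| * |e 0| := by
      rcases n.eq_zero_or_pos with rfl | hn
      · simpa using by positivity
      · exact div_le_self (by positivity) (mod_cast hn)
    have : 0 < 1 - |φ| := by linarith
    calc (∑ i ∈ Finset.range n, |e (i + 1)|) / n
        ≤ (|φ| * |e 0| + ∑ i ∈ Finset.range n, |u i|) / (1 - |φ|) / n := by
          gcongr
          exact sum_abs_succ_le_of_ar1 hφ hrec n
      _ = (|φ| * |e 0| / n + (∑ i ∈ Finset.range n, |u i|) / n) / (1 - |φ|) := by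
          rw [div_right_comm, add_div]
      _ ≤ (|φ| * |e 0| + B) / (1 - |φ|) := by
          gcongr
          exact hB (mem_range_self n)

end AutoregressiveFilter

section Probability

variable {Ω : Type*} [MeasurableSpace Ω] {μ : Measure Ω}

theorem integrable_of_integrable_pow [IsFiniteMeasure μ] {f : Ω → ℝ}
    (hf : AEStronglyMeasurable f μ) {p : ℕ} (hp : 1 ≤ p) (hint : Integrable (fun ω => f ω ^ p) μ) :
    Integrable f μ := by
  have hnorm : Integrable (fun ω => ‖f ω‖ ^ 1) μ :=
    integrable_norm_pow_of_le hf hp (by simpa only [norm_pow] using hint.norm)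
  simpa only [pow_one, integrable_norm_iff hf] using hnorm

theorem ae_averagesOut_of_iid {X : ℕ → Ω → ℝ} (hint : Integrable (X 0) μ)
    (hindep : Pairwise fun i j => X i ⟂ᵢ[μ] X j) (hident : ∀ i, IdentDistrib (X i) (X 0) μ μ)
    (hmean : ∫ ω, X 0 ω ∂μ = 0) : ∀ᵐ ω ∂μ, AveragesOut fun i => X i ω := by
  have hindep_abs : Pairwise fun i j => (fun ω => |X i ω|) ⟂ᵢ[μ] fun ω => |X j ω| :=
    fun i j hij => (hindep hij).comp measurable_abs measurable_abs
  filter_upwards [strong_law_ae_real X hint hindep hident,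
    strong_law_ae_real (fun i ω => |X i ω|) hint.abs hindep_abs
      fun i => (hident i).comp measurable_abs] with ω hX hX_abs
  exact ⟨hmean ▸ hX, hX_abs.bddAbove_range⟩

theorem eq_mul_add_of_hasSum_pow_mul {φ a b : ℝ} {v : ℤ → ℝ} {i : ℤ}
    (ha : HasSum (fun j : ℕ => φ ^ j * v (i - j)) a)
    (hb : HasSum (fun j : ℕ => φ ^ j * v (i + 1 - j)) b) : b = φ * a + v (i + 1) := by
  refine hb.unique ?_
  have shifted : HasSum (fun j : ℕ => φ ^ (j + 1) * v (i + 1 - (j + 1 : ℕ))) (φ * a) := by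
    simpa only [pow_succ', mul_assoc, Nat.cast_succ, add_sub_add_right_eq_sub]
      using ha.mul_left φ
  simpa [add_comm] using HasSum.zero_add (f := fun j : ℕ => φ ^ j * v (i + 1 - j)) shifted

theorem ae_averagesOut_of_causal_ar1 {φ : ℝ} {U ε : ℤ → Ω → ℝ} (hφ : |φ| < 1)
    (hint : Integrable (U 0) μ) (hindep : Pairwise fun i j => U i ⟂ᵢ[μ] U j)
    (hident : ∀ i, IdentDistrib (U i) (U 0) μ μ) (hmean : ∫ ω, U 0 ω ∂μ = 0)
    (hε : ∀ᵐ ω ∂μ, ∀ i : ℤ, HasSum (fun j : ℕ => φ ^ j * U (i - j) ω) (ε i ω)) :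
    ∀ᵐ ω ∂μ, AveragesOut fun n : ℕ => ε (n + 1) ω := by
  have hU : ∀ᵐ ω ∂μ, AveragesOut fun n : ℕ => U (n + 1) ω :=
    ae_averagesOut_of_iid (X := fun n : ℕ => U (n + 1))
      ((hident _).integrable_iff.2 hint) (fun i j hij => hindep (by simpa using hij))
      (fun i => (hident _).trans (hident _).symm)
      ((hident _).integral_eq.trans hmean)
  filter_upwards [hU, hε] with ω hUω hεω
  have hrec (n : ℕ) : ε ((n + 1 : ℕ) : ℤ) ω = φ * ε n ω + U (n + 1) ω := by
    rw [Nat.cast_succ]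
    exact eq_mul_add_of_hasSum_pow_mul (v := fun i => U i ω) (hεω n) (hεω (n + 1))
  exact AveragesOut.of_ar1 (e := fun n => ε n ω) hφ hrec hUω

end Probability

section LeastSquares

variable {X : Type*} [TopologicalSpace X]

/-- The linear functional `h ↦ n⁻¹ ∑ e i * h (d n i)`, summed over `i < n`: the average over the
`n`-th row of the triangular array of design points `d`, with weights `e`. -/
noncomputable def weightedMean (d : ℕ → ℕ → X) (e : ℕ → ℝ) (n : ℕ) : C(X, ℝ) →L[ℝ] ℝ :=
  (n : ℝ)⁻¹ • ∑ i ∈ Finset.range n, e i • ContinuousMap.evalCLM ℝ (d n i)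

theorem weightedMean_apply (d : ℕ → ℕ → X) (e : ℕ → ℝ) (n : ℕ) (h : C(X, ℝ)) :
    weightedMean d e n h = (∑ i ∈ Finset.range n, e i * h (d n i)) / n := by
  simp [weightedMean, div_eq_inv_mul]

theorem norm_weightedMean_le [CompactSpace X] (d : ℕ → ℕ → X) (e : ℕ → ℝ) (n : ℕ) :
    ‖weightedMean d e n‖ ≤ (∑ i ∈ Finset.range n, |e i|) / n := by
  refine ContinuousLinearMap.opNorm_le_bound _ (by positivity) fun h => ?_
  rw [weightedMean_apply, norm_div, Real.norm_natCast, div_mul_eq_mul_div, Finset.sum_mul]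
  gcongr
  refine norm_sum_le_of_le _ fun i _ => ?_
  rw [norm_mul, Real.norm_eq_abs (e i)]
  gcongr
  exact h.norm_coe_le_norm _

theorem weightedMean_one_sq_le {d : ℕ → ℕ → X} {e : ℕ → ℝ} {n : ℕ} {f g : C(X, ℝ)}
    (hmin : ∑ i ∈ Finset.range n, (f (d n i) + e i - g (d n i)) ^ 2 ≤
      ∑ i ∈ Finset.range n, e i ^ 2) :
    weightedMean d 1 n ((g - f) ^ 2) ≤ 2 * weightedMean d e n (g - f) := by
  have expand : ∑ i ∈ Finset.range n, (f (d n i) + e i - g (d n i)) ^ 2 =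
      ∑ i ∈ Finset.range n, (g - f) (d n i) ^ 2 -
        2 * ∑ i ∈ Finset.range n, e i * (g - f) (d n i) + ∑ i ∈ Finset.range n, e i ^ 2 := by
    rw [Finset.mul_sum, ← Finset.sum_sub_distrib, ← Finset.sum_add_distrib]
    refine Finset.sum_congr rfl fun i _ => ?_
    rw [ContinuousMap.sub_apply]
    ring
  simp only [weightedMean_apply, Pi.one_apply, one_mul, ContinuousMap.pow_apply,
    ← mul_div_assoc]
  gcongr
  linarith

theorem tendsto_apply_of_tendsto_pointwise {𝕜 E F : Type*} [NontriviallyNormedField 𝕜]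
    [NormedAddCommGroup E] [NormedSpace 𝕜 E] [CompleteSpace E] [NormedAddCommGroup F]
    [NormedSpace 𝕜 F] {Λ : ℕ → E →L[𝕜] F} {Λlim : E → F}
    (hΛ : ∀ x, Tendsto (fun n => Λ n x) atTop (𝓝 (Λlim x))) {l : Filter ℕ} (hl : l ≤ atTop)
    {u : ℕ → E} {x : E} (hu : Tendsto u l (𝓝 x)) :
    Tendsto (fun n => Λ n (u n)) l (𝓝 (Λlim x)) := by
  obtain ⟨C, hC⟩ : ∃ C, ∀ n, ‖Λ n‖ ≤ C := banach_steinhaus fun y =>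
    let ⟨B, hB⟩ := (hΛ y).norm.bddAbove_range
    ⟨B, fun n => hB (mem_range_self n)⟩
  have error_tendsto : Tendsto (fun n => Λ n (u n - x)) l (𝓝 0) := by
    refine squeeze_zero_norm (fun n => (Λ n).le_of_opNorm_le (hC n) _) ?_
    simpa using (hu.sub_const x).norm.const_mul C
  simpa using error_tendsto.add ((hΛ x).mono_left hl)

theorem tendsto_of_leastSquares [CompactSpace X] {Θ : Type*} [TopologicalSpace Θ]
    [CompactSpace Θ] {d : ℕ → ℕ → X} {e : ℕ → ℝ} {I : C(X, ℝ) → ℝ}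
    (hd : ∀ h, Tendsto (fun n => weightedMean d 1 n h) atTop (𝓝 (I h)))
    (he : ∀ h, Tendsto (fun n => weightedMean d e n h) atTop (𝓝 0))
    {f : Θ → C(X, ℝ)} (hf : Continuous f) {θ₀ : Θ}
    (hident : ∀ θ, I ((f θ - f θ₀) ^ 2) = 0 → θ = θ₀) {θhat : ℕ → Θ}
    (hmin : ∀ n, ∑ i ∈ Finset.range n, (f θ₀ (d n i) + e i - f (θhat n) (d n i)) ^ 2 ≤
      ∑ i ∈ Finset.range n, e i ^ 2) :
    Tendsto θhat atTop (𝓝 θ₀) := by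
  refine tendsto_nhds_of_unique_mapClusterPt fun θ hθ => hident θ ?_
  obtain ⟨l, hl, hθl⟩ := mapClusterPt_iff_ultrafilter.1 hθ
  have misfit_tendsto : Tendsto (fun n => f (θhat n) - f θ₀) l (𝓝 (f θ - f θ₀)) :=
    ((hf.tendsto θ).comp hθl).sub_const _
  have noise_tendsto := tendsto_apply_of_tendsto_pointwise he hl misfit_tendsto
  have loss_tendsto := tendsto_apply_of_tendsto_pointwise hd hl (misfit_tendsto.pow 2)
  apply le_antisymm
  · simpa using le_of_tendsto_of_tendsto' loss_tendsto (noise_tendsto.const_mul 2)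
      fun n => weightedMean_one_sq_le (hmin n)
  · refine ge_of_tendsto' loss_tendsto fun n => ?_
    rw [weightedMean_apply]
    exact div_nonneg (Finset.sum_nonneg fun i _ => by simpa using sq_nonneg _) n.cast_nonneg

end LeastSquares

section LipschitzSummation

theorem norm_sum_smul_le_sum_norm_sub {R M : Type*} [NormedRing R] [NormedAddCommGroup M]
    [Module R M] [IsBoundedSMul R M] (a : ℕ → R) (e : ℕ → M) (n : ℕ) :
    ‖∑ i ∈ Finset.range n, a i • e i‖ ≤ ‖a (n - 1)‖ * ‖∑ i ∈ Finset.range n, e i‖ +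
      ∑ i ∈ Finset.range (n - 1), ‖a (i + 1) - a i‖ * ‖∑ j ∈ Finset.range (i + 1), e j‖ := by
  rw [Finset.sum_range_by_parts]
  refine (norm_sub_le _ _).trans (add_le_add (norm_smul_le _ _) ?_)
  exact norm_sum_le_of_le _ fun i _ => norm_smul_le _ _

theorem abs_mean_mul_le_of_abs_sub_le {a e : ℕ → ℝ} {B D : ℝ} {n : ℕ} (ha : ∀ i, |a i| ≤ B)
    (hstep : ∀ i, |a (i + 1) - a i| ≤ D / n) :
    |(∑ i ∈ Finset.range n, e i * a i) / n| ≤ B * |(∑ i ∈ Finset.range n, e i) / n| +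
      D * ((n : ℝ)⁻¹ *
        ∑ i ∈ Finset.range n, |(∑ j ∈ Finset.range (i + 1), e j) / (i + 1 : ℕ)|) := by
  rcases n.eq_zero_or_pos with rfl | hn
  · simp
  set S : ℕ → ℝ := fun i => ∑ j ∈ Finset.range i, e j
  have step_nonneg : 0 ≤ D / n := (abs_nonneg _).trans (hstep 0)
  have partial_sum_le {i : ℕ} (hi : i ∈ Finset.range (n - 1)) :
      |S (i + 1)| ≤ n * |S (i + 1) / (i + 1 : ℕ)| := by
    rw [abs_div, Nat.abs_cast, mul_div_left_comm]
    refine le_mul_of_one_le_right (abs_nonneg _) ((one_le_div (by positivity)).2 ?_)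
    exact mod_cast (by grind : i + 1 ≤ n)
  have increments_le : ∑ i ∈ Finset.range (n - 1), |a (i + 1) - a i| * |S (i + 1)| ≤
      D / n * (n * ∑ i ∈ Finset.range n, |S (i + 1) / (i + 1 : ℕ)|) :=
    calc ∑ i ∈ Finset.range (n - 1), |a (i + 1) - a i| * |S (i + 1)|
        ≤ ∑ i ∈ Finset.range (n - 1), D / n * (n * |S (i + 1) / (i + 1 : ℕ)|) := by
          gcongr with i hi
          · exact hstep i
          · exact partial_sum_le hi
      _ ≤ ∑ i ∈ Finset.range n, D / n * (n * |S (i + 1) / (i + 1 : ℕ)|) :=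
          Finset.sum_le_sum_of_subset_of_nonneg (Finset.range_mono n.pred_le)
            fun i _ _ => by positivity
      _ = _ := by rw [Finset.mul_sum, Finset.mul_sum]
  have abel_bound : |∑ i ∈ Finset.range n, e i * a i| ≤
      |a (n - 1)| * |S n| + ∑ i ∈ Finset.range (n - 1), |a (i + 1) - a i| * |S (i + 1)| := by
    simpa only [smul_eq_mul, mul_comm (a _) (e _), Real.norm_eq_abs]
      using norm_sum_smul_le_sum_norm_sub a e n
  calc |(∑ i ∈ Finset.range n, e i * a i) / n|
      ≤ (B * |S n| + D / n * (n * ∑ i ∈ Finset.range n, |S (i + 1) / (i + 1 : ℕ)|)) / n := by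
        rw [abs_div, Nat.abs_cast]
        gcongr
        exact abel_bound.trans (by gcongr; exact ha _)
    _ = _ := by
        rw [abs_div, Nat.abs_cast]
        field_simp
        rfl

theorem dense_setOf_lipschitzWith (X : Type*) [MetricSpace X] [CompactSpace X] :
    Dense {h : C(X, ℝ) | ∃ K, LipschitzWith K h} := by
  rw [dense_iff_closure_eq]
  refine ContinuousMap.sublattice_closure_eq_top _ ⟨0, 0, LipschitzWith.const 0⟩ ?_ ?_ ?_
  · rintro f ⟨K, hf⟩ g ⟨K', hg⟩
    exact ⟨_, hf.min hg⟩
  · rintro f ⟨K, hf⟩ g ⟨K', hg⟩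
    exact ⟨_, hf.max hg⟩
  · intro v x y
    refine ⟨⟨fun w => v x + (v y - v x) / dist y x * dist w x, by fun_prop⟩,
      ⟨_, (LipschitzWith.const _).add
        ((lipschitzWith_smul ((v y - v x) / dist y x)).comp (.dist_left x))⟩, by simp, ?_⟩
    have interpolates : (v y - v x) / dist y x * dist y x = v y - v x :=
      div_mul_cancel_of_imp fun hxy => by rw [dist_eq_zero.1 hxy, sub_self]
    simp [interpolates]

variable {X : Type*} [MetricSpace X] [CompactSpace X] {d : ℕ → ℕ → X} {C : ℝ} {e : ℕ → ℝ}

theorem tendsto_weightedMean_of_lipschitzWith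
    (hd : ∀ n i, dist (d n (i + 1)) (d n i) ≤ C / n)
    (he : Tendsto (fun n : ℕ => (∑ i ∈ Finset.range n, e i) / n) atTop (𝓝 0))
    {K : NNReal} {h : C(X, ℝ)} (hh : LipschitzWith K h) :
    Tendsto (fun n => weightedMean d e n h) atTop (𝓝 0) := by
  have mean_abs_tendsto : Tendsto
      (fun n : ℕ => |(∑ i ∈ Finset.range (n + 1), e i) / (n + 1 : ℕ)|) atTop (𝓝 0) := by
    simpa only [abs_zero, Function.comp_def] using (he.comp (tendsto_add_atTop_nat 1)).abs
  have bound_tendsto := (he.abs.const_mul ‖h‖).add (mean_abs_tendsto.cesaro.const_mul (K * C))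
  rw [abs_zero, mul_zero, mul_zero, add_zero] at bound_tendsto
  refine squeeze_zero_norm (fun n => ?_) bound_tendsto
  rw [weightedMean_apply, Real.norm_eq_abs]
  refine abs_mean_mul_le_of_abs_sub_le (fun i => h.norm_coe_le_norm _) fun i => ?_
  rw [← Real.dist_eq, mul_div_assoc]
  exact hh.dist_le_mul_of_le (hd n i)

theorem AveragesOut.tendsto_weightedMean (he : AveragesOut e)
    (hd : ∀ n i, dist (d n (i + 1)) (d n i) ≤ C / n) (h : C(X, ℝ)) :
    Tendsto (fun n => weightedMean d e n h) atTop (𝓝 0) := by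
  obtain ⟨B, hB⟩ := he.bddAbove_mean_abs
  have norm_le : ∃ B, ∀ n, ‖weightedMean d e n‖ ≤ B :=
    ⟨B, fun n => (norm_weightedMean_le d e n).trans (hB (mem_range_self n))⟩
  have equicont : Equicontinuous ((⇑) ∘ weightedMean d e) :=
    ((NormedSpace.equicontinuous_TFAE (weightedMean d e)).out 5 1).1 norm_le
  have closed : IsClosed {h : C(X, ℝ) | Tendsto (fun n => weightedMean d e n h) atTop (𝓝 0)} :=
    equicont.isClosed_setOfPred_tendsto continuous_const
  refine closed.closure_subset_iff.2 ?_ (dense_setOf_lipschitzWith X h)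
  rintro g ⟨K, hg⟩
  exact tendsto_weightedMean_of_lipschitzWith hd he.tendsto_mean hg

end LipschitzSummation

section RiemannSum

variable {E : Type*} [NormedAddCommGroup E] [NormedSpace ℝ E] [CompleteSpace E] {F : ℝ → E}

theorem norm_sum_smul_sub_integral_le {t : ℕ → ℝ} (ht : Monotone t) {n : ℕ} {η : ℝ}
    (hint : ∀ k < n, IntervalIntegrable F volume (t k) (t (k + 1)))
    (hosc : ∀ k < n, ∀ w ∈ Ioc (t k) (t (k + 1)), ‖F (t (k + 1)) - F w‖ ≤ η) :
    ‖∑ k ∈ Finset.range n, (t (k + 1) - t k) • F (t (k + 1)) - ∫ w in t 0..t n, F w‖ ≤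
      η * (t n - t 0) := by
  rw [← intervalIntegral.sum_integral_adjacent_intervals hint, ← Finset.sum_sub_distrib,
    ← Finset.sum_range_sub, Finset.mul_sum]
  refine norm_sum_le_of_le _ fun k hk => ?_
  have hk := Finset.mem_range.1 hk
  have hle : t k ≤ t (k + 1) := ht k.le_succ
  rw [← intervalIntegral.integral_const,
    ← intervalIntegral.integral_sub intervalIntegrable_const (hint k hk),
    ← abs_of_nonneg (sub_nonneg.2 hle)]
  exact intervalIntegral.norm_integral_le_of_norm_le_const (uIoc_of_le hle ▸ hosc k hk)

theorem norm_riemannSum_sub_integral_le_of_dist_le (hF : Continuous F) {a b η : ℝ}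
    (hab : a < b) {n : ℕ} (hn : 0 < n)
    (hosc : ∀ v w, dist v w ≤ (b - a) / n → dist (F v) (F w) ≤ η) :
    ‖(n : ℝ)⁻¹ • ∑ i ∈ Finset.range n, F (a + (i + 1 : ℕ) * (b - a) / n) -
      (b - a)⁻¹ • ∫ w in a..b, F w‖ ≤ η := by
  have hab' : 0 < b - a := sub_pos.2 hab
  have hn' : (0 : ℝ) < n := mod_cast hn
  set t : ℕ → ℝ := fun k => a + k * (b - a) / n with ht
  have t_step (k : ℕ) : t (k + 1) - t k = (b - a) / n := by
    simp only [ht, Nat.cast_succ]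
    ring
  have t_mono : Monotone t := monotone_nat_of_le_succ fun k => by
    linarith [t_step k, div_pos hab' hn']
  have t_last : t n = b := by
    simp only [ht]
    field_simp
    ring
  have riemann_le : ‖∑ k ∈ Finset.range n, ((b - a) / n) • F (t (k + 1)) - ∫ w in a..b, F w‖ ≤
      η * (b - a) := by
    have h := norm_sum_smul_sub_integral_le (n := n) (η := η) t_mono
      (fun k _ => hF.intervalIntegrable _ _) fun k _ w hw => by
        rw [← dist_eq_norm]
        refine hosc _ _ ?_
        rw [Real.dist_eq, abs_of_nonneg (by linarith [hw.2])]
        linarith [hw.1, t_step k]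
    simpa only [t_step, t_last, show t 0 = a by simp [ht]] using h
  have rescale : (n : ℝ)⁻¹ • ∑ i ∈ Finset.range n, F (t (i + 1)) =
      (b - a)⁻¹ • ∑ i ∈ Finset.range n, ((b - a) / n) • F (t (i + 1)) := by
    rw [← Finset.smul_sum, smul_smul, ← mul_div_assoc, inv_mul_cancel₀ hab'.ne', one_div]
  rwa [rescale, ← smul_sub, norm_smul, norm_inv, Real.norm_of_nonneg hab'.le,
    inv_mul_le_iff₀' hab']

theorem tendsto_riemannSum_of_uniformContinuous (hF : UniformContinuous F) {a b : ℝ}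
    (hab : a < b) :
    Tendsto (fun n : ℕ => (n : ℝ)⁻¹ •
        ∑ i ∈ Finset.range n, F (a + (i + 1 : ℕ) * (b - a) / n)) atTop
      (𝓝 ((b - a)⁻¹ • ∫ w in a..b, F w)) := by
  rw [Metric.tendsto_nhds]
  intro η hη
  obtain ⟨δ, hδ, hosc⟩ := Metric.uniformContinuous_iff.1 hF (η / 2) (half_pos hη)
  filter_upwards [eventually_gt_atTop 0,
    (tendsto_const_div_atTop_nhds_zero_nat (b - a)).eventually_lt_const hδ] with n hn hmesh
  rw [dist_eq_norm]
  exact (norm_riemannSum_sub_integral_le_of_dist_le hF.continuous hab hn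
    fun v w hvw => (hosc (hvw.trans_lt hmesh)).le).trans_lt (half_lt_self hη)

end RiemannSum

section Grid

variable {Δ : ℝ}

/-- The `i`-th design point of the grid `Δ / n, 2 * Δ / n, …, Δ` of `[0, Δ]`. Indices start at
zero, and indices `i ≥ n` are projected to the end point, so that consecutive points are never
further than `Δ / n` apart. -/
noncomputable def gridPoint (hΔ : 0 ≤ Δ) (n i : ℕ) : Icc 0 Δ :=
  projIcc 0 Δ hΔ ((i + 1 : ℕ) * Δ / n)

theorem coe_gridPoint (hΔ : 0 ≤ Δ) {n i : ℕ} (hi : i < n) :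
    (gridPoint hΔ n i : ℝ) = (i + 1 : ℕ) * Δ / n := by
  have hn : (0 : ℝ) < n := mod_cast hi.pos
  have hin : ((i + 1 : ℕ) : ℝ) ≤ n := mod_cast hi
  rw [gridPoint, projIcc_of_mem]
  constructor
  · positivity
  · rw [div_le_iff₀ hn, mul_comm]
    gcongr

theorem dist_gridPoint_succ_le (hΔ : 0 ≤ Δ) (n i : ℕ) :
    dist (gridPoint hΔ n (i + 1)) (gridPoint hΔ n i) ≤ Δ / n := by
  refine ((LipschitzWith.projIcc hΔ).dist_le_mul _ _).trans_eq ?_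
  rw [NNReal.coe_one, one_mul, Real.dist_eq, ← sub_div, ← sub_mul, Nat.cast_succ (i + 1),
    add_sub_cancel_left, one_mul, abs_of_nonneg (by positivity)]

theorem tendsto_weightedMean_gridPoint (hΔ : 0 < Δ) (h : C(Icc 0 Δ, ℝ)) :
    Tendsto (fun n => weightedMean (gridPoint hΔ.le) 1 n h) atTop
      (𝓝 ((1 / Δ) * ∫ w in 0..Δ, IccExtend hΔ.le h w)) := by
  have huc : UniformContinuous (IccExtend hΔ.le h) :=
    (CompactSpace.uniformContinuous_of_continuous h.continuous).comp
      (LipschitzWith.projIcc hΔ.le).uniformContinuous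
  simpa [weightedMean_apply, gridPoint, IccExtend, div_eq_inv_mul]
    using tendsto_riemannSum_of_uniformContinuous huc hΔ

end Grid

section Model

variable {X Y : Type*} [TopologicalSpace X] [LocallyCompactSpace X]

/-- The map `h ↦ log ∘ h` on the positive continuous functions, as a continuous map for the
compact-open topology. -/
noncomputable def logMap : C({h : C(X, ℝ) // ∀ w, 0 < h w}, C(X, ℝ)) :=
  ContinuousMap.curry ⟨fun p => Real.log (p.1.1 p.2),
    Continuous.log (by fun_prop) fun p => (p.1.2 p.2).ne'⟩

variable [TopologicalSpace Y] [LocallyCompactSpace Y] {Γ : Set ℝ} {𝒢 : Set C(Y, ℝ)}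
  (x : C(X, ℝ)) (z : C(X, Y)) (hΓ : ∀ γ ∈ Γ, ∀ w, 0 < 1 + γ * x w) (h𝒢 : ∀ g ∈ 𝒢, ∀ t, 0 < g t)

/-- The regression function `w ↦ log (1 + γ x(w)) + log g(z(w))` of the model with parameter
`(γ, g)`. -/
noncomputable def logResponse (θ : Γ × 𝒢) : C(X, ℝ) :=
  logMap ⟨1 + (θ.1 : ℝ) • x, hΓ θ.1 θ.1.2⟩ + (logMap ⟨θ.2, h𝒢 θ.2 θ.2.2⟩).comp z

theorem logResponse_apply (θ : Γ × 𝒢) (w : X) :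
    logResponse x z hΓ h𝒢 θ w = Real.log (1 + θ.1 * x w) + Real.log (θ.2.1 (z w)) :=
  rfl

theorem continuous_logResponse : Continuous (logResponse x z hΓ h𝒢) := by
  refine (logMap.continuous.comp ?_).add
    (z.continuous_precomp.comp (logMap.continuous.comp ?_))
  · exact Continuous.subtype_mk (by fun_prop) _
  · exact Continuous.subtype_mk (by fun_prop) _

end Model

section Profiles

/-- The shape-constrained class of nonincreasing, `[m, M]`-valued, `K`-Lipschitz functions on `Y`,
as a set of bundled continuous functions. -/
def antitoneLipschitz (Y : Type*) [PseudoMetricSpace Y] [Preorder Y] (m M : ℝ) (K : NNReal) :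
    Set C(Y, ℝ) :=
  {g | Antitone g ∧ (∀ t, g t ∈ Icc m M) ∧ LipschitzWith K g}

theorem isCompact_antitoneLipschitz (Y : Type*) [PseudoMetricSpace Y] [Preorder Y] (m M : ℝ)
    (K : NNReal) : IsCompact (antitoneLipschitz Y m M K) := by
  refine ArzelaAscoli.isCompact_of_equicontinuous _ ?_
    (LipschitzWith.uniformEquicontinuous _ K fun g => g.2.2.2).equicontinuous
  have image_eq : ContinuousMap.toFun '' antitoneLipschitz Y m M K =
      univ.pi (fun _ => Icc m M) ∩ ({g | Antitone g} ∩ {g | LipschitzWith K g}) := by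
    ext g
    constructor
    · rintro ⟨h, ⟨hanti, hmem, hlip⟩, rfl⟩
      exact ⟨fun t _ => hmem t, hanti, hlip⟩
    · rintro ⟨hmem, hanti, hlip⟩
      exact ⟨⟨g, hlip.continuous⟩, ⟨hanti, fun t => hmem t trivial, hlip⟩, rfl⟩
  rw [image_eq]
  exact (isCompact_univ_pi fun _ => isCompact_Icc).inter_right
    (isClosed_antitone.inter (isClosed_setOfPred_lipschitzWith K))

theorem pos_of_mem_antitoneLipschitz {Y : Type*} [PseudoMetricSpace Y] [Preorder Y] {m M : ℝ}
    {K : NNReal} (hm : 0 < m) : ∀ g ∈ antitoneLipschitz Y m M K, ∀ t, 0 < g t :=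
  fun _ hg t => hm.trans_le (hg.2.1 t).1

variable {A m M L : ℝ}

/-- The restriction to `[0, A]` of a member of the class 𝒢. -/
def inG.restrict {g : ℝ → ℝ} (hg : inG A m M L g) :
    antitoneLipschitz (Icc 0 A) m M L.toNNReal :=
  ⟨⟨fun t => g t, hg.1.domRestrict⟩, fun s t hst => hg.2.1 s.2 t.2 hst, fun t => hg.2.2.1 t t.2,
    lipschitzOnWith_iff_restrict.1 hg.2.2.2⟩

theorem exists_inG_restrict_eq (hA : 0 ≤ A) (g : antitoneLipschitz (Icc 0 A) m M L.toNNReal) :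
    ∃ (g' : ℝ → ℝ) (hg' : inG A m M L g'), hg'.restrict = g := by
  obtain ⟨g, hanti, hmem, hlip⟩ := g
  have hext {t : ℝ} (ht : t ∈ Icc 0 A) : IccExtend hA g t = g ⟨t, ht⟩ := IccExtend_of_mem hA g ht
  refine ⟨IccExtend hA g, ⟨g.continuous.Icc_extend'.continuousOn, ?_, fun t _ => hmem _, ?_⟩, ?_⟩
  · exact (hanti.comp_monotone (monotone_projIcc hA)).antitoneOn _
  · rw [← mul_one L.toNNReal]
    exact (hlip.comp (LipschitzWith.projIcc hA)).lipschitzOnWith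
  · ext t
    exact hext t.2

theorem inG.tendstoUniformlyOn_log {ι : Type*} {l : Filter ι} {g : ι → ℝ → ℝ} {g₀ : ℝ → ℝ}
    (hm : 0 < m) (hg : ∀ n, inG A m M L (g n)) (hg₀ : inG A m M L g₀)
    (htends : Tendsto (fun n => (hg n).restrict) l (𝓝 hg₀.restrict)) :
    TendstoUniformlyOn (fun n t => Real.log (g n t)) (fun t => Real.log (g₀ t)) l (Icc 0 A) := by
  have log_continuous : Continuous fun h : antitoneLipschitz (Icc 0 A) m M L.toNNReal =>
      logMap ⟨h.1, pos_of_mem_antitoneLipschitz hm h.1 h.2⟩ := by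
    refine logMap.continuous.comp ?_
    exact Continuous.subtype_mk (by fun_prop) _
  rw [tendstoUniformlyOn_iff_tendstoUniformly_comp_coe]
  exact ContinuousMap.tendsto_iff_tendstoUniformly.1 ((log_continuous.tendsto _).comp htends)

end Profiles

section Criteria

variable {Δ γ₀ γ : ℝ} {x z g₀ g : ℝ → ℝ} {f₀ f : C(Icc 0 Δ, ℝ)}

theorem Qemp_eq_sum_gridPoint {Ω : Type*} (hΔ : 0 ≤ Δ)
    (hf₀ : ∀ w, f₀ w = Real.log (1 + γ₀ * x w) + Real.log (g₀ (z w)))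
    (hf : ∀ w, f w = Real.log (1 + γ * x w) + Real.log (g (z w)))
    (ε : ℤ → Ω → ℝ) (n : ℕ) (ω : Ω) :
    Qemp Δ γ₀ x z g₀ ε n γ g ω = (1 / n) * ∑ i ∈ Finset.range n,
      (f₀ (gridPoint hΔ n i) + ε (i + 1) ω - f (gridPoint hΔ n i)) ^ 2 := by
  rw [Qemp, ← Finset.Ico_add_one_right_eq_Icc, ← Finset.sum_Ico_add' _ 0 n 1,
    ← Finset.range_eq_Ico]
  congr 1
  refine Finset.sum_congr rfl fun i hi => ?_
  rw [hf₀, hf, coe_gridPoint hΔ (Finset.mem_range.1 hi), Nat.cast_succ (R := ℤ)]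
  ring

theorem Qlim_eq_integral_sq_sub (hΔ : 0 ≤ Δ)
    (hf₀ : ∀ w, f₀ w = Real.log (1 + γ₀ * x w) + Real.log (g₀ (z w)))
    (hf : ∀ w, f w = Real.log (1 + γ * x w) + Real.log (g (z w))) :
    Qlim Δ γ₀ x z g₀ γ g = (1 / Δ) * ∫ w in 0..Δ, IccExtend hΔ ⇑((f - f₀) ^ 2) w := by
  rw [Qlim]
  congr 1
  refine intervalIntegral.integral_congr fun w hw => ?_
  rw [uIcc_of_le hΔ] at hw
  rw [IccExtend_of_mem _ _ hw, ContinuousMap.pow_apply, ContinuousMap.sub_apply, hf, hf₀]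
  ring

theorem sum_sq_residual_le_of_Qemp_le {Ω : Type*} (hΔ : 0 ≤ Δ)
    (hf₀ : ∀ w, f₀ w = Real.log (1 + γ₀ * x w) + Real.log (g₀ (z w)))
    (hf : ∀ w, f w = Real.log (1 + γ * x w) + Real.log (g (z w)))
    {ε : ℤ → Ω → ℝ} {n : ℕ} {ω : Ω}
    (hle : Qemp Δ γ₀ x z g₀ ε n γ g ω ≤ Qemp Δ γ₀ x z g₀ ε n γ₀ g₀ ω) :
    ∑ i ∈ Finset.range n,
        (f₀ (gridPoint hΔ n i) + ε (i + 1) ω - f (gridPoint hΔ n i)) ^ 2 ≤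
      ∑ i ∈ Finset.range n, ε (i + 1) ω ^ 2 := by
  rcases n.eq_zero_or_pos with rfl | hn
  · simp
  rw [Qemp_eq_sum_gridPoint hΔ hf₀ hf, Qemp_eq_sum_gridPoint hΔ hf₀ hf₀,
    mul_le_mul_iff_right₀ (by positivity)] at hle
  simpa only [add_sub_cancel_left] using hle

theorem eq_of_integral_sq_sub_eq_zero {A m M L : ℝ} {Γ : Set ℝ} (hΔ : 0 ≤ Δ) (hA : 0 ≤ A)
    {F : Γ × antitoneLipschitz (Icc 0 A) m M L.toNNReal → C(Icc 0 Δ, ℝ)}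
    (hF : ∀ (γ : Γ) (g : ℝ → ℝ) (hg : inG A m M L g) (w : Icc 0 Δ),
      F (γ, hg.restrict) w = Real.log (1 + γ * x w) + Real.log (g (z w)))
    (hγ₀ : γ₀ ∈ Γ) (hg₀ : inG A m M L g₀)
    (huniq : ∀ γ ∈ Γ, ∀ g : ℝ → ℝ, inG A m M L g → Qlim Δ γ₀ x z g₀ γ g = 0 →
      γ = γ₀ ∧ ∀ t ∈ Icc (0 : ℝ) A, g t = g₀ t)
    (θ : Γ × antitoneLipschitz (Icc 0 A) m M L.toNNReal)
    (hθ : (1 / Δ) * ∫ w in 0..Δ,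
      IccExtend hΔ ⇑((F θ - F (⟨γ₀, hγ₀⟩, hg₀.restrict)) ^ 2) w = 0) :
    θ = (⟨γ₀, hγ₀⟩, hg₀.restrict) := by
  obtain ⟨⟨γ, hγ⟩, g⟩ := θ
  obtain ⟨g, hg, rfl⟩ := exists_inG_restrict_eq hA g
  rw [← Qlim_eq_integral_sq_sub hΔ (hF _ _ _) (hF _ _ _)] at hθ
  obtain ⟨rfl, hgg₀⟩ := huniq γ hγ g hg hθ
  exact Prod.ext rfl (Subtype.ext (ContinuousMap.ext fun t => hgg₀ t t.2))

theorem one_add_mul_pos_of_mem_Icc {xm xM y : ℝ} (hxm : 0 < xm) (hxM : 0 < xM)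
    (hγ : γ ∈ Icc (-(1 / xM)) (1 / xm)) (hy : y ∈ Ioo (-xm) xM) : 0 < 1 + γ * y := by
  rcases le_or_gt 0 y with hy0 | hy0
  · have lower : -(1 / xM) * y ≤ γ * y := mul_le_mul_of_nonneg_right hγ.1 hy0
    have small : y / xM < 1 := (div_lt_one hxM).2 hy.2
    linarith [show -(1 / xM) * y = -(y / xM) by ring]
  · have lower : 1 / xm * y ≤ γ * y := mul_le_mul_of_nonpos_right hγ.2 hy0.le
    have small : -1 < y / xm := (lt_div_iff₀ hxm).2 (by linarith [hy.1])
    linarith [show 1 / xm * y = y / xm by ring]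

theorem tendsto_and_tendstoUniformlyOn_log_of_averagesOut {Ω : Type*} {A xm xM m M L : ℝ}
    (hΔ : 0 < Δ) (hxm : 0 < xm) (hxM : 0 < xM) (hm : 0 < m)
    (hxcont : ContinuousOn x (Icc 0 Δ)) (hxrange : MapsTo x (Icc 0 Δ) (Ioo (-xm) xM))
    (hzcont : ContinuousOn z (Icc 0 Δ)) (hzrange : MapsTo z (Icc 0 Δ) (Icc 0 A))
    {ε : ℤ → Ω → ℝ} {ω : Ω} (hε : AveragesOut fun i : ℕ => ε (i + 1) ω)
    (hγ₀ : γ₀ ∈ Icc (-(1 / xM)) (1 / xm)) (hg₀ : inG A m M L g₀)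
    (huniq : ∀ γ ∈ Icc (-(1 / xM)) (1 / xm), ∀ g : ℝ → ℝ, inG A m M L g →
      Qlim Δ γ₀ x z g₀ γ g = 0 → γ = γ₀ ∧ ∀ t ∈ Icc (0 : ℝ) A, g t = g₀ t)
    {γhat : ℕ → ℝ} {ghat : ℕ → ℝ → ℝ}
    (hest : ∀ n : ℕ, γhat n ∈ Icc (-(1 / xM)) (1 / xm) ∧ inG A m M L (ghat n) ∧
      Qemp Δ γ₀ x z g₀ ε n (γhat n) (ghat n) ω ≤ Qemp Δ γ₀ x z g₀ ε n γ₀ g₀ ω) :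
    Tendsto γhat atTop (𝓝 γ₀) ∧
      TendstoUniformlyOn (fun n t => Real.log (ghat n t)) (fun t => Real.log (g₀ t)) atTop
        (Icc 0 A) := by
  have hA : 0 ≤ A := nonempty_Icc.1 ⟨z 0, hzrange (left_mem_Icc.2 hΔ.le)⟩
  let 𝒢 := antitoneLipschitz (Icc 0 A) m M L.toNNReal
  have : CompactSpace 𝒢 := isCompact_iff_compactSpace.1 (isCompact_antitoneLipschitz ..)
  let xc : C(Icc 0 Δ, ℝ) := ⟨_, hxcont.domRestrict⟩
  let zc : C(Icc 0 Δ, Icc 0 A) := ⟨_, hzcont.mapsToRestrict hzrange⟩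
  have gain_pos : ∀ γ ∈ Icc (-(1 / xM)) (1 / xm), ∀ w, 0 < 1 + γ * xc w := fun γ hγ w =>
    one_add_mul_pos_of_mem_Icc hxm hxM hγ (hxrange w.2)
  obtain ⟨f, f_continuous, f_apply⟩ :
      ∃ f : Icc (-(1 / xM)) (1 / xm) × 𝒢 → C(Icc 0 Δ, ℝ), Continuous f ∧
        ∀ γ (g : ℝ → ℝ) (hg : inG A m M L g) (w : Icc 0 Δ),
          f (γ, hg.restrict) w = Real.log (1 + γ * x w) + Real.log (g (z w)) :=
    ⟨logResponse xc zc gain_pos (pos_of_mem_antitoneLipschitz hm), continuous_logResponse ..,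
      fun _ _ _ _ => logResponse_apply ..⟩
  choose hγhat hghat hmin using hest
  let θ₀ : Icc (-(1 / xM)) (1 / xm) × 𝒢 := (⟨γ₀, hγ₀⟩, hg₀.restrict)
  let θhat (n : ℕ) : Icc (-(1 / xM)) (1 / xm) × 𝒢 := (⟨γhat n, hγhat n⟩, (hghat n).restrict)
  have consistent : Tendsto θhat atTop (𝓝 θ₀) :=
    tendsto_of_leastSquares (tendsto_weightedMean_gridPoint hΔ)
      (hε.tendsto_weightedMean (dist_gridPoint_succ_le hΔ.le)) f_continuous
      (eq_of_integral_sq_sub_eq_zero hΔ.le hA f_apply hγ₀ hg₀ huniq)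
      fun n => sum_sq_residual_le_of_Qemp_le hΔ.le (f_apply _ _ _) (f_apply _ _ _) (hmin n)
  exact ⟨(continuous_subtype_val.tendsto _).comp consistent.fst_nhds,
    inG.tendstoUniformlyOn_log hm hghat hg₀ consistent.snd_nhds⟩

end Criteria

theorem stmt6_general {Ω : Type*} [MeasurableSpace Ω] (μ : Measure Ω)
    (Δ A xm xM : ℝ) (hΔ : 0 < Δ) (hxm : 0 < xm) (hxM : 0 < xM) (x z : ℝ → ℝ)
    (hxcont : ContinuousOn x (Icc 0 Δ)) (hxrange : ∀ w ∈ Icc (0 : ℝ) Δ, x w ∈ Ioo (-xm) xM)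
    (hzcont : ContinuousOn z (Icc 0 Δ)) (hzrange : ∀ w ∈ Icc (0 : ℝ) Δ, z w ∈ Icc 0 A)
    (U : ℤ → Ω → ℝ) (hUint : Integrable (U 0) μ) (hUindep : Pairwise fun i j => U i ⟂ᵢ[μ] U j)
    (hUident : ∀ j, IdentDistrib (U j) (U 0) μ μ) (hUmean : ∫ ω, U 0 ω ∂μ = 0)
    (φ : ℝ) (hφ : |φ| < 1) (ε : ℤ → Ω → ℝ)
    (hεsum : ∀ᵐ ω ∂μ, ∀ i : ℤ, HasSum (fun j : ℕ => φ ^ j * U (i - j) ω) (ε i ω))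
    (γ₀ : ℝ) (hγ₀ : γ₀ ∈ Icc (-(1 / xM)) (1 / xm)) (m M L : ℝ) (hm : 0 < m)
    (g₀ : ℝ → ℝ) (hg₀ : inG A m M L g₀)
    (huniq : ∀ γ ∈ Icc (-(1 / xM)) (1 / xm), ∀ g : ℝ → ℝ, inG A m M L g →
      Qlim Δ γ₀ x z g₀ γ g = 0 → γ = γ₀ ∧ ∀ t ∈ Icc (0 : ℝ) A, g t = g₀ t)
    (γhat : ℕ → Ω → ℝ) (ghat : ℕ → Ω → ℝ → ℝ)
    (hest : ∀ᵐ ω ∂μ, ∀ n : ℕ,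
      γhat n ω ∈ Icc (-(1 / xM)) (1 / xm) ∧ inG A m M L (ghat n ω) ∧
      Qemp Δ γ₀ x z g₀ ε n (γhat n ω) (ghat n ω) ω ≤ Qemp Δ γ₀ x z g₀ ε n γ₀ g₀ ω) :
    ∀ᵐ ω ∂μ, Tendsto (γhat · ω) atTop (𝓝 γ₀) ∧
      TendstoUniformlyOn (fun n t => Real.log (ghat n ω t)) (fun t => Real.log (g₀ t)) atTop
        (Icc 0 A) := by
  filter_upwards [ae_averagesOut_of_causal_ar1 hφ hUint hUindep hUident hUmean hεsum, hest]
    with ω hεω hestω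
  exact tendsto_and_tendstoUniformlyOn_log_of_averagesOut hΔ hxm hxM hm hxcont hxrange hzcont
    hzrange hεω hγ₀ hg₀ huniq hestω

/-- Corollary 1: under the hypotheses of Theorem 2,
`sup_{t ∈ [0,A]} |log ĝₙ(t) - log g₀(t)| → 0` with probability 1. -/
theorem stmt6
    {Ω : Type*} [MeasurableSpace Ω] (μ : Measure Ω) [IsProbabilityMeasure μ]
    (Δ A xm xM : ℝ) (hΔ : 0 < Δ) (hA : 0 < A) (hxm : 0 < xm) (hxM : 0 < xM)
    (x z : ℝ → ℝ)
    (hxcont : ContinuousOn x (Icc 0 Δ))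
    (hxrange : ∀ w ∈ Icc (0 : ℝ) Δ, x w ∈ Ioo (-xm) xM)
    (hzcont : ContinuousOn z (Icc 0 Δ))
    (hzrange : ∀ w ∈ Icc (0 : ℝ) Δ, z w ∈ Icc 0 A)
    (hzmono : StrictMonoOn z (Icc 0 Δ))
    (U : ℤ → Ω → ℝ) (hUmeas : ∀ j, Measurable (U j))
    (hUindep : iIndepFun U μ)
    (hUident : ∀ j, μ.map (U j) = μ.map (U 0))
    (σ : ℝ) (hσ : 0 < σ)
    (hUmean : ∫ ω, U 0 ω ∂μ = 0)
    (hUvar : ∫ ω, (U 0 ω) ^ 2 ∂μ = σ ^ 2)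
    (hU8 : Integrable (fun ω => (U 0 ω) ^ 8) μ)
    (φ : ℝ) (hφ0 : φ ≠ 0) (hφ1 : |φ| < 1)
    (ε : ℤ → Ω → ℝ) (hεmeas : ∀ i, Measurable (ε i))
    (hεsum : ∀ᵐ ω ∂μ, ∀ i : ℤ, HasSum (fun j : ℕ => φ ^ j * U (i - (j : ℤ)) ω) (ε i ω))
    (γ₀ : ℝ) (hγ₀ : γ₀ ∈ Ioo (-(1 / xM)) (1 / xm))
    (m M L : ℝ) (hm : 0 < m) (hmM : m < M) (hL : 0 < L)
    (g₀ : ℝ → ℝ) (hg₀ : inG A m M L g₀)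
    (huniq : ∀ γ ∈ Icc (-(1 / xM)) (1 / xm), ∀ g : ℝ → ℝ, inG A m M L g →
      Qlim Δ γ₀ x z g₀ γ g = 0 → γ = γ₀ ∧ ∀ t ∈ Icc (0 : ℝ) A, g t = g₀ t)
    (γhat : ℕ → Ω → ℝ) (ghat : ℕ → Ω → ℝ → ℝ)
    (hest : ∀ᵐ ω ∂μ, ∀ n : ℕ,
      γhat n ω ∈ Icc (-(1 / xM)) (1 / xm) ∧ inG A m M L (ghat n ω) ∧
      ∀ γ ∈ Icc (-(1 / xM)) (1 / xm), ∀ g : ℝ → ℝ, inG A m M L g →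
        Qemp Δ γ₀ x z g₀ ε n (γhat n ω) (ghat n ω) ω ≤ Qemp Δ γ₀ x z g₀ ε n γ g ω) :
    ∀ᵐ ω ∂μ, ∀ e > (0 : ℝ), ∃ N : ℕ, ∀ n ≥ N, ∀ t ∈ Icc (0 : ℝ) A,
      |Real.log (ghat n ω t) - Real.log (g₀ t)| < e := by
  filter_upwards [stmt6_general μ Δ A xm xM hΔ hxm hxM x z hxcont hxrange hzcont hzrange U
    (integrable_of_integrable_pow (hUmeas 0).aestronglyMeasurable (by decide) hU8)
    (fun _ _ => hUindep.indepFun)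
    (fun j => ⟨(hUmeas j).aemeasurable, (hUmeas 0).aemeasurable, hUident j⟩) hUmean φ hφ1 ε hεsum
    γ₀ (Ioo_subset_Icc_self hγ₀) m M L hm g₀ hg₀ huniq γhat ghat
    (hest.mono fun ω h n => ⟨(h n).1, (h n).2.1, (h n).2.2 γ₀ (Ioo_subset_Icc_self hγ₀) g₀ hg₀⟩)]
    with ω hω
  simpa only [Metric.tendstoUniformlyOn_iff, Real.dist_eq, abs_sub_comm, eventually_atTop]
    using hω.2
end

section
/- Let g̃_n be random positive continuous functions on [0,A] such that sup_{t∈[0,A]} |log g̃_n(t) − log g₀(t)| → 0 almost surely. Then for every fixed γ∈Γ, the criterion Q̃_n(γ) = (1/n)·Σ_{i=1}^n (yᵢ − log g̃_n(zᵢ) − log(1+γxᵢ))² converges almost surely, as n→∞, to σ²/(1−φ²) + (1/Δ)·∫₀^Δ [log(1+γ₀x(w)) − log(1+γx(w))]² dw. -/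
open MeasureTheory ProbabilityTheory Filter Set Topology

/-- The updated criterion `Q̃ₙ(γ)(ω)` in which the nonparametric component is replaced by
a given estimate `lg` of `log g`. -/
noncomputable def Qupd {Ω : Type*} (Δ γ₀ : ℝ) (x z g₀ : ℝ → ℝ) (ε : ℤ → Ω → ℝ)
    (lg : ℝ → ℝ) (n : ℕ) (γ : ℝ) (ω : Ω) : ℝ :=
  (1 / (n : ℝ)) * ∑ i ∈ Finset.Icc 1 n,
    ((Real.log (1 + γ₀ * x ((i : ℝ) * Δ / n)) + Real.log (g₀ (z ((i : ℝ) * Δ / n))) +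
        ε (i : ℤ) ω)
      - lg (z ((i : ℝ) * Δ / n)) - Real.log (1 + γ * x ((i : ℝ) * Δ / n))) ^ 2

/-! Write the residual as `h(dᵢ) + eᵢ + rᵢ`, where `h = log (1 + γ₀ x) - log (1 + γ x)`, `e` is the
AR(1) process driven by the same innovations but started at `0`, and `r` collects the geometrically
decaying effect of the true starting value and the uniformly small estimation error of `log g₀`.
By Cauchy–Schwarz `r` does not affect the limit, and the averages of `h(dᵢ)²` are Riemann sums.

For the noise, the strong law of large numbers handles the averages of `Uᵢ` and `Uᵢ²`. The variables
`eᵢ Uᵢ₊₁` are orthogonal with bounded second moments, so Rajchman's strong law sends their averages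
to `0`. Averaging `eᵢ₊₁ = φ eᵢ + Uᵢ₊₁` and its square, whose boundary terms are `o(n)`, then gives
the limits `0` and `σ² / (1 - φ²)` for the averages of `e` and `e²`. Finally the averages of
`h(dᵢ) eᵢ` tend to `0`, for Lipschitz `h` by Abel summation and for continuous `h` by Weierstrass
approximation. -/

section MeanSquare

open scoped BigOperators

variable {α ι : Type*} {l : Filter α} {s : α → Finset ι} {a b : α → ι → ℝ} {V W : ℝ}

lemma tendsto_expect_add_sq (ha : Tendsto (fun n => 𝔼 i ∈ s n, a n i ^ 2) l (𝓝 V))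
    (hb : Tendsto (fun n => 𝔼 i ∈ s n, b n i ^ 2) l (𝓝 W))
    (hab : Tendsto (fun n => 𝔼 i ∈ s n, a n i * b n i) l (𝓝 0)) :
    Tendsto (fun n => 𝔼 i ∈ s n, (a n i + b n i) ^ 2) l (𝓝 (V + W)) := by
  have h := (ha.add hb).add (hab.const_mul 2)
  rw [mul_zero, add_zero] at h
  refine h.congr fun n => ?_
  simp only [Finset.mul_expect, ← Finset.expect_add_distrib]
  exact Finset.expect_congr rfl fun i _ => by ring

lemma tendsto_expect_mul_zero (ha : Tendsto (fun n => 𝔼 i ∈ s n, a n i ^ 2) l (𝓝 V))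
    (hb : Tendsto (fun n => 𝔼 i ∈ s n, b n i ^ 2) l (𝓝 0)) :
    Tendsto (fun n => 𝔼 i ∈ s n, a n i * b n i) l (𝓝 0) := by
  have h := (ha.mul hb).sqrt
  rw [mul_zero, Real.sqrt_zero] at h
  exact squeeze_zero_norm
    (fun n => Real.abs_le_sqrt (Finset.expect_mul_sq_le_sq_mul_sq _ _ _)) h

lemma tendsto_expect_add_sq_of_negligible
    (ha : Tendsto (fun n => 𝔼 i ∈ s n, a n i ^ 2) l (𝓝 V))
    (hb : Tendsto (fun n => 𝔼 i ∈ s n, b n i ^ 2) l (𝓝 0)) :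
    Tendsto (fun n => 𝔼 i ∈ s n, (a n i + b n i) ^ 2) l (𝓝 V) := by
  simpa only [add_zero] using tendsto_expect_add_sq ha hb (tendsto_expect_mul_zero ha hb)

lemma eventually_expect_abs_le_of_tendsto_expect_sq
    (ha : Tendsto (fun n => 𝔼 i ∈ s n, a n i ^ 2) l (𝓝 V)) :
    ∀ᶠ n in l, 𝔼 i ∈ s n, |a n i| ≤ √(V + 1) := by
  filter_upwards [ha.eventually_lt_const (lt_add_one V)] with n hn
  obtain hs | hs := (s n).eq_empty_or_nonempty
  · simp [hs]
  · have h := Finset.expect_mul_sq_le_sq_mul_sq (s n) (fun i => |a n i|) fun _ => 1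
    simp only [mul_one, one_pow, sq_abs, Finset.expect_const hs] at h
    exact Real.le_sqrt_of_sq_le (h.trans hn.le)

lemma tendsto_expect_sq_sub_of_tendstoUniformlyOn {β : Type*} {F : α → β → ℝ} {f : β → ℝ}
    {S : Set β} {t : α → ι → β}
    (hF : TendstoUniformlyOn F f l S) (ht : ∀ n, ∀ i ∈ s n, t n i ∈ S) :
    Tendsto (fun n => 𝔼 i ∈ s n, (f (t n i) - F n (t n i)) ^ 2) l (𝓝 0) := by
  have h_nonneg : ∀ n, 0 ≤ 𝔼 i ∈ s n, (f (t n i) - F n (t n i)) ^ 2 :=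
    fun n => Finset.expect_nonneg fun i _ => sq_nonneg _
  refine Metric.tendsto_nhds.2 fun e he => ?_
  filter_upwards [Metric.tendstoUniformlyOn_iff.1 hF (√(e / 2)) (by positivity)] with n hn
  rw [Real.dist_0_eq_abs, abs_of_nonneg (h_nonneg n)]
  have h_le : ∀ i ∈ s n, (f (t n i) - F n (t n i)) ^ 2 ≤ e / 2 := fun i hi => by
    rw [← sq_abs, ← Real.dist_eq]
    exact (Real.le_sqrt dist_nonneg (by positivity)).1 (hn _ (ht n i hi)).le
  obtain hs | hs := (s n).eq_empty_or_nonempty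
  · simpa [hs] using he
  · exact (Finset.expect_le hs h_le).trans_lt (half_lt_self he)

end MeanSquare

section Cesaro

open scoped BigOperators

variable {u v w y : ℕ → ℝ} {c q s : ℝ}

lemma tendsto_div_succ_zero_of_tendsto_expect
    (h : Tendsto (fun n => 𝔼 i ∈ Finset.range n, u i) atTop (𝓝 c)) :
    Tendsto (fun n : ℕ => u n / (n + 1)) atTop (𝓝 0) := by
  have h_diff := ((tendsto_add_atTop_iff_nat 1).2 h).sub
    (h.mul (tendsto_natCast_div_add_atTop (1 : ℝ)))
  rw [mul_one, sub_self] at h_diff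
  refine h_diff.congr' ?_
  filter_upwards [eventually_ne_atTop 0] with n hn
  simp only [Finset.expect_eq_sum_div_card, Finset.card_range, Finset.sum_range_succ, Nat.cast_succ]
  field_simp
  ring

lemma tendsto_zero_of_le_mul_add (hq₀ : 0 ≤ q) (hq₁ : q < 1) (hw : ∀ n, 0 ≤ w n)
    (hwv : ∀ n, w (n + 1) ≤ q * w n + v n) (hv : Tendsto v atTop (𝓝 0)) :
    Tendsto w atTop (𝓝 0) := by
  have hq : 0 < 1 - q := sub_pos.2 hq₁
  refine Metric.tendsto_nhds.2 fun e he => ?_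
  obtain ⟨N, hN⟩ := eventually_atTop.1
    (hv.eventually_lt_const (mul_pos (half_pos he) hq))
  have h_bound : ∀ k, w (k + N) ≤ e / 2 + q ^ k * |w N - e / 2| := fun k => by
    induction k with
    | zero => rw [zero_add, pow_zero, one_mul]; linarith [le_abs_self (w N - e / 2)]
    | succ k ih =>
      calc w (k + 1 + N) = w (k + N + 1) := by rw [Nat.add_right_comm]
        _ ≤ q * w (k + N) + v (k + N) := hwv _
        _ ≤ q * (e / 2 + q ^ k * |w N - e / 2|) + e / 2 * (1 - q) := by
          gcongr
          exact (hN _ (Nat.le_add_left N k)).le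
        _ = e / 2 + q ^ (k + 1) * |w N - e / 2| := by ring
  have h_lim : Tendsto (fun k => e / 2 + q ^ k * |w N - e / 2|) atTop (𝓝 (e / 2)) := by
    simpa using ((tendsto_pow_atTop_nhds_zero_of_lt_one hq₀ hq₁).mul_const
      |w N - e / 2|).const_add (e / 2)
  obtain ⟨K, hK⟩ := eventually_atTop.1 (h_lim.eventually_lt_const (half_lt_self he))
  filter_upwards [eventually_ge_atTop (K + N)] with n hn
  obtain ⟨k, rfl⟩ := Nat.exists_eq_add_of_le' hn
  rw [Real.dist_0_eq_abs, abs_of_nonneg (hw _), ← add_assoc]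
  exact (h_bound _).trans_lt (hK _ (Nat.le_add_left K k))

lemma tendsto_sq_div_zero_of_recursion {φ : ℝ} (hφ : |φ| < 1)
    (hy : ∀ k, y (k + 1) = φ * y k + u (k + 1))
    (hu : Tendsto (fun n => 𝔼 i ∈ Finset.range n, u (i + 1) ^ 2) atTop (𝓝 s)) :
    Tendsto (fun n : ℕ => y n ^ 2 / n) atTop (𝓝 0) := by
  have hu_div : Tendsto (fun n : ℕ => |u (n + 1)| / √(n + 1)) atTop (𝓝 0) := by
    have h := (tendsto_div_succ_zero_of_tendsto_expect hu).sqrt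
    rw [Real.sqrt_zero] at h
    exact h.congr fun n => by rw [Real.sqrt_div (sq_nonneg _), Real.sqrt_sq_eq_abs]
  have hy_div : Tendsto (fun n : ℕ => |y n| / √n) atTop (𝓝 0) := by
    refine (tendsto_add_atTop_iff_nat 1).1 (tendsto_zero_of_le_mul_add (abs_nonneg φ) hφ
      (fun n => by positivity) (fun n => ?_) ((tendsto_add_atTop_iff_nat 1).2 hu_div))
    calc |y (n + 1 + 1)| / √((n + 1 + 1 : ℕ) : ℝ)
        ≤ (|φ| * |y (n + 1)| + |u (n + 1 + 1)|) / √((n + 1 + 1 : ℕ) : ℝ) := by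
          rw [hy, ← abs_mul]
          gcongr
          exact abs_add_le _ _
      _ = |φ| * (|y (n + 1)| / √((n + 1 + 1 : ℕ) : ℝ))
          + |u (n + 1 + 1)| / √((n + 1 : ℕ) + 1) := by push_cast; ring
      _ ≤ |φ| * (|y (n + 1)| / √((n + 1 : ℕ) : ℝ)) + |u (n + 1 + 1)| / √((n + 1 : ℕ) + 1) := by
          gcongr
          exact Nat.le_succ _
  have h := hy_div.pow 2
  rw [zero_pow two_ne_zero] at h
  exact h.congr fun n => by rw [div_pow, sq_abs, Real.sq_sqrt n.cast_nonneg]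

lemma tendsto_div_zero_of_tendsto_sq_div_zero
    (h : Tendsto (fun n : ℕ => y n ^ 2 / n) atTop (𝓝 0)) :
    Tendsto (fun n : ℕ => y n / n) atTop (𝓝 0) := by
  have h_sqrt := (h.mul tendsto_inv_atTop_nhds_zero_nat).sqrt
  rw [mul_zero, Real.sqrt_zero] at h_sqrt
  refine squeeze_zero_norm (fun n => Real.abs_le_sqrt (le_of_eq ?_)) h_sqrt
  ring

lemma tendsto_expect_of_recursion (hq : q ≠ 1) (hy : ∀ i, y (i + 1) = q * y i + v i)
    (hy_div : Tendsto (fun n : ℕ => y n / n) atTop (𝓝 0))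
    (hv : Tendsto (fun n => 𝔼 i ∈ Finset.range n, v i) atTop (𝓝 c)) :
    Tendsto (fun n => 𝔼 i ∈ Finset.range n, y (i + 1)) atTop (𝓝 (c / (1 - q))) := by
  have hq' : 1 - q ≠ 0 := sub_ne_zero.2 hq.symm
  have h_sum : ∀ n, (1 - q) * ∑ i ∈ Finset.range n, y (i + 1)
      = ∑ i ∈ Finset.range n, v i - q * (y n - y 0) := fun n => by
    rw [← Finset.sum_range_sub, Finset.mul_sum, Finset.mul_sum, ← Finset.sum_sub_distrib]
    exact Finset.sum_congr rfl fun i _ => by rw [hy]; ring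
  have h_diff := hy_div.sub (tendsto_const_div_atTop_nhds_zero_nat (y 0))
  have h := (hv.sub (h_diff.const_mul q)).div_const (1 - q)
  rw [sub_zero, mul_zero, sub_zero] at h
  refine h.congr fun n => ?_
  rw [div_eq_iff hq', ← sub_div, Finset.expect_eq_sum_div_card, Finset.expect_eq_sum_div_card,
    Finset.card_range, mul_div_assoc', ← sub_div, ← h_sum]
  ring

lemma sub_eq_pow_mul_of_recursion {φ : ℝ} (hy : ∀ k, y (k + 1) = φ * y k + u (k + 1))
    (hw : ∀ k, w (k + 1) = φ * w k + u (k + 1)) (k : ℕ) : y k - w k = φ ^ k * (y 0 - w 0) := by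
  induction k with
  | zero => rw [pow_zero, one_mul]
  | succ k ih => rw [hy, hw, add_sub_add_right_eq_sub, ← mul_sub, ih, pow_succ', mul_assoc]

lemma tendsto_expect_sq_sub_of_recursion {φ : ℝ} (hφ : |φ| < 1)
    (hy : ∀ k, y (k + 1) = φ * y k + u (k + 1)) (hw : ∀ k, w (k + 1) = φ * w k + u (k + 1)) :
    Tendsto (fun n => 𝔼 i ∈ Finset.range n, (y (i + 1) - w (i + 1)) ^ 2) atTop (𝓝 0) := by
  have h_diff : Tendsto (fun k => (y (k + 1) - w (k + 1)) ^ 2) atTop (𝓝 0) := by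
    have h := ((tendsto_pow_atTop_nhds_zero_of_abs_lt_one hφ).mul_const (y 0 - w 0)).pow 2
    rw [zero_mul, zero_pow two_ne_zero] at h
    refine ((tendsto_add_atTop_iff_nat 1).2 h).congr fun k => ?_
    rw [← sub_eq_pow_mul_of_recursion hy hw (k + 1)]
  refine h_diff.cesaro.congr fun n => ?_
  rw [Finset.expect_eq_sum_div_card, Finset.card_range, inv_mul_eq_div]

end Cesaro

/-- The point `(i + 1)Δ/n` of the regular design with `n` points on `[0, Δ]`, written `d_{i+1}` in
the paper; the index is shifted so that the design is indexed by `Finset.range n`. -/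
noncomputable def designPoint (Δ : ℝ) (n i : ℕ) : ℝ := ((i + 1 : ℕ) : ℝ) * Δ / n

section Design

open scoped BigOperators

variable {Δ : ℝ} {n i : ℕ} {f : ℝ → ℝ} {b : ℕ → ℝ}

lemma designPoint_mem_Icc (hΔ : 0 ≤ Δ) (hi : i < n) : designPoint Δ n i ∈ Icc 0 Δ := by
  have hn : (0 : ℝ) < n := Nat.cast_pos.2 (Nat.zero_lt_of_lt hi)
  have hin : ((i + 1 : ℕ) : ℝ) ≤ n := Nat.cast_le.2 hi
  refine ⟨by unfold designPoint; positivity, ?_⟩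
  rw [designPoint, div_le_iff₀ hn, mul_comm]
  gcongr

lemma designPoint_succ_sub (Δ : ℝ) (n i : ℕ) :
    designPoint Δ n (i + 1) - designPoint Δ n i = Δ / n := by
  simp only [designPoint, Nat.cast_succ]
  ring

lemma abs_sum_mul_le_of_abs_succ_sub_le {w : ℕ → ℝ} {δ : ℝ}
    (hw : ∀ i, i + 1 < n → |w (i + 1) - w i| ≤ δ) :
    |∑ i ∈ Finset.range n, w i * b i| ≤ |w (n - 1)| * |∑ i ∈ Finset.range n, b i|
      + δ * ∑ i ∈ Finset.range (n - 1), |∑ j ∈ Finset.range (i + 1), b j| := by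
  have h_parts := Finset.sum_range_by_parts w b n
  simp only [smul_eq_mul] at h_parts
  rw [h_parts, ← abs_mul]
  refine (abs_sub _ _).trans (add_le_add_right ?_ _)
  rw [Finset.mul_sum]
  refine (Finset.abs_sum_le_sum_abs _ _).trans (Finset.sum_le_sum fun i hi => ?_)
  rw [abs_mul]
  gcongr
  exact hw i (Nat.add_lt_of_lt_sub (Finset.mem_range.1 hi))

-- Abel summation moves the averaging from the weights to the partial averages of `b`.
lemma abs_expect_lipschitz_mul_le {K : NNReal} (hΔ : 0 ≤ Δ)
    (hf : LipschitzOnWith K f (Icc 0 Δ)) (n : ℕ) :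
    |𝔼 i ∈ Finset.range n, f (designPoint Δ n i) * b i| ≤
      |f Δ| * |𝔼 i ∈ Finset.range n, b i|
        + K * Δ * ((n : ℝ)⁻¹ * ∑ i ∈ Finset.range n, |𝔼 j ∈ Finset.range (i + 1), b j|) := by
  obtain rfl | hn := n.eq_zero_or_pos
  · simp
  have hn' : (0 : ℝ) < n := Nat.cast_pos.2 hn
  have h_last : designPoint Δ n (n - 1) = Δ := by
    rw [designPoint, Nat.sub_add_cancel hn, mul_div_cancel_left₀ _ hn'.ne']
  have h_step : ∀ i, i + 1 < n →
      |f (designPoint Δ n (i + 1)) - f (designPoint Δ n i)| ≤ K * (Δ / n) := fun i hi => by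
    have h := hf.dist_le_mul _ (designPoint_mem_Icc hΔ hi) _
      (designPoint_mem_Icc hΔ (Nat.lt_of_succ_lt hi))
    rwa [Real.dist_eq, Real.dist_eq, designPoint_succ_sub,
      abs_of_nonneg (a := Δ / n) (by positivity)] at h
  have h_partial : ∀ i ∈ Finset.range (n - 1),
      |∑ j ∈ Finset.range (i + 1), b j| ≤ n * |𝔼 j ∈ Finset.range (i + 1), b j| := fun i hi => by
    rw [Finset.expect_eq_sum_div_card, Finset.card_range, abs_div, Nat.abs_cast, mul_div_assoc',
      le_div_iff₀ (by positivity), mul_comm]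
    gcongr
    have := Finset.mem_range.1 hi
    lia
  have h_abel :=
    abs_sum_mul_le_of_abs_succ_sub_le (w := fun i => f (designPoint Δ n i)) (b := b) h_step
  rw [h_last] at h_abel
  rw [Finset.expect_eq_sum_div_card, Finset.expect_eq_sum_div_card, Finset.card_range, abs_div,
    abs_div, Nat.abs_cast, div_le_iff₀ hn']
  refine h_abel.trans ?_
  calc _ ≤ |f Δ| * |∑ i ∈ Finset.range n, b i|
        + K * (Δ / n) * ∑ i ∈ Finset.range n, n * |𝔼 j ∈ Finset.range (i + 1), b j| := by
        gcongr
        refine (Finset.sum_le_sum h_partial).trans ?_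
        exact Finset.sum_le_sum_of_subset_of_nonneg
          (Finset.range_subset_range.2 (Nat.sub_le n 1)) fun i _ _ => by positivity
    _ = _ := by
        rw [← Finset.mul_sum]
        field_simp

lemma tendsto_expect_lipschitz_mul {K : NNReal} (hΔ : 0 ≤ Δ) (hf : LipschitzOnWith K f (Icc 0 Δ))
    (hb : Tendsto (fun n => 𝔼 i ∈ Finset.range n, b i) atTop (𝓝 0)) :
    Tendsto (fun n => 𝔼 i ∈ Finset.range n, f (designPoint Δ n i) * b i) atTop (𝓝 0) := by
  have hb_abs := (tendsto_zero_iff_abs_tendsto_zero _).1 hb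
  have h := (hb_abs.const_mul |f Δ|).add
    ((((tendsto_add_atTop_iff_nat 1).2 hb_abs).cesaro).const_mul (K * Δ))
  rw [mul_zero, mul_zero, add_zero] at h
  exact squeeze_zero_norm (abs_expect_lipschitz_mul_le hΔ hf) h

lemma tendsto_expect_continuous_mul {M : ℝ} (hΔ : 0 ≤ Δ) (hf : ContinuousOn f (Icc 0 Δ))
    (hb : Tendsto (fun n => 𝔼 i ∈ Finset.range n, b i) atTop (𝓝 0))
    (hM : ∀ᶠ n in atTop, 𝔼 i ∈ Finset.range n, |b i| ≤ M) :
    Tendsto (fun n => 𝔼 i ∈ Finset.range n, f (designPoint Δ n i) * b i) atTop (𝓝 0) := by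
  refine Metric.tendsto_nhds.2 fun e he => ?_
  obtain ⟨p, hp⟩ := exists_polynomial_near_of_continuousOn 0 Δ f hf (e / 2 / (|M| + 1))
    (by positivity)
  obtain ⟨K, hK⟩ := (p.contDiff_aeval 1).contDiffOn.exists_lipschitzOnWith one_ne_zero
    (convex_Icc 0 Δ) isCompact_Icc
  filter_upwards [Metric.tendsto_nhds.1 (tendsto_expect_lipschitz_mul hΔ hK hb) (e / 2)
    (half_pos he), hM] with n hpn hMn
  have h_approx : |𝔼 i ∈ Finset.range n, (f (designPoint Δ n i) - p.eval (designPoint Δ n i)) * b i|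
      ≤ e / 2 := by
    calc _ ≤ 𝔼 i ∈ Finset.range n, e / 2 / (|M| + 1) * |b i| := by
          refine (Finset.abs_expect_le _ _).trans (Finset.expect_le_expect fun i hi => ?_)
          rw [abs_mul, abs_sub_comm]
          gcongr
          exact (hp _ (designPoint_mem_Icc hΔ (Finset.mem_range.1 hi))).le
      _ ≤ e / 2 / (|M| + 1) * (|M| + 1) := by
          rw [← Finset.mul_expect]
          gcongr
          linarith [le_abs_self M]
      _ = e / 2 := by field_simp
  rw [Real.dist_0_eq_abs] at hpn ⊢
  calc _ = |𝔼 i ∈ Finset.range n, (f (designPoint Δ n i) - p.eval (designPoint Δ n i)) * b i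
        + 𝔼 i ∈ Finset.range n, p.eval (designPoint Δ n i) * b i| := by
        simp only [← Finset.expect_add_distrib, sub_mul, sub_add_cancel]
    _ < e / 2 + e / 2 := (abs_add_le _ _).trans_lt (add_lt_add_of_le_of_lt h_approx hpn)
    _ = e := add_halves e

lemma abs_const_mul_sub_integral_le {l r c e : ℝ} (hlr : l ≤ r)
    (hf : IntervalIntegrable f volume l r) (hc : ∀ w ∈ Ioc l r, |c - f w| ≤ e) :
    |c * (r - l) - ∫ w in l..r, f w| ≤ e * (r - l) := by
  have h_sub : c * (r - l) - ∫ w in l..r, f w = ∫ w in l..r, (c - f w) := by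
    rw [intervalIntegral.integral_sub (by simp) hf, intervalIntegral.integral_const, smul_eq_mul,
      mul_comm]
  rw [h_sub, ← abs_of_nonneg (sub_nonneg.2 hlr)]
  exact intervalIntegral.norm_integral_le_of_norm_le_const (f := fun w => c - f w)
    (by rwa [uIoc_of_le hlr])

lemma abs_sum_mul_sub_integral_le {a : ℕ → ℝ} {e : ℝ} (ha : Monotone a)
    (hf : IntervalIntegrable f volume (a 0) (a n))
    (he : ∀ i < n, ∀ w ∈ Ioc (a i) (a (i + 1)), |f (a (i + 1)) - f w| ≤ e) :
    |∑ i ∈ Finset.range n, f (a (i + 1)) * (a (i + 1) - a i) - ∫ w in a 0..a n, f w|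
      ≤ e * (a n - a 0) := by
  have hf_cell : ∀ i < n, IntervalIntegrable f volume (a i) (a (i + 1)) := fun i hi =>
    hf.mono_set (by
      rw [uIcc_of_le (ha i.le_succ), uIcc_of_le (ha n.zero_le)]
      exact Icc_subset_Icc (ha i.zero_le) (ha hi))
  rw [← intervalIntegral.sum_integral_adjacent_intervals hf_cell, ← Finset.sum_sub_distrib,
    ← Finset.sum_range_sub, Finset.mul_sum]
  refine (Finset.abs_sum_le_sum_abs _ _).trans (Finset.sum_le_sum fun i hi => ?_)
  have hi := Finset.mem_range.1 hi
  exact abs_const_mul_sub_integral_le (ha i.le_succ) (hf_cell i hi) (he i hi)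

lemma tendsto_expect_designPoint (hΔ : 0 < Δ) (hf : ContinuousOn f (Icc 0 Δ)) :
    Tendsto (fun n => 𝔼 i ∈ Finset.range n, f (designPoint Δ n i)) atTop
      (𝓝 (1 / Δ * ∫ w in 0..Δ, f w)) := by
  refine Metric.tendsto_nhds.2 fun e he => ?_
  obtain ⟨δ, hδ, h_unif⟩ := Metric.uniformContinuousOn_iff.1
    (isCompact_Icc.uniformContinuousOn_of_continuous hf) (e / 2) (half_pos he)
  filter_upwards [(tendsto_const_div_atTop_nhds_zero_nat Δ).eventually_lt_const hδ,
    eventually_gt_atTop 0] with n hn_mesh hn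
  have hn' : (0 : ℝ) < n := Nat.cast_pos.2 hn
  set a : ℕ → ℝ := fun i => (i : ℝ) * Δ / n with ha
  have ha_mono : Monotone a := fun i j hij => by simp only [ha]; gcongr
  have ha_sub : ∀ i, a (i + 1) - a i = Δ / n := fun i => by simp only [ha, Nat.cast_succ]; ring
  have ha_zero : a 0 = 0 := by simp [ha]
  have ha_last : a n = Δ := mul_div_cancel_left₀ _ hn'.ne'
  have ha_mem : ∀ i < n, Icc (a i) (a (i + 1)) ⊆ Icc 0 Δ := fun i hi =>
    Icc_subset_Icc (ha_zero.symm.trans_le (ha_mono i.zero_le)) ((ha_mono hi).trans_eq ha_last)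
  have h_osc : ∀ i < n, ∀ w ∈ Ioc (a i) (a (i + 1)), |f (a (i + 1)) - f w| ≤ e / 2 :=
    fun i hi w hw => (h_unif _ (ha_mem i hi (right_mem_Icc.2 (ha_mono i.le_succ))) _
      (ha_mem i hi (Ioc_subset_Icc_self hw)) (by
        rw [Real.dist_eq, abs_of_nonneg (sub_nonneg.2 hw.2)]
        linarith [hw.1, ha_sub i])).le
  have h_int : IntervalIntegrable f volume (a 0) (a n) := by
    rw [ha_zero, ha_last]
    exact (uIcc_of_le hΔ.le ▸ hf).intervalIntegrable
  have h_riemann := abs_sum_mul_sub_integral_le ha_mono h_int h_osc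
  simp only [ha_sub, ← Finset.sum_mul, ha_zero, ha_last, sub_zero] at h_riemann
  have h_expect : 𝔼 i ∈ Finset.range n, f (designPoint Δ n i)
      = 1 / Δ * ((∑ i ∈ Finset.range n, f (a (i + 1))) * (Δ / n)) := by
    rw [Finset.expect_eq_sum_div_card, Finset.card_range]
    field_simp
    rfl
  rw [Real.dist_eq, h_expect, ← mul_sub, abs_mul, abs_of_pos (one_div_pos.2 hΔ), one_div_mul_eq_div,
    div_lt_iff₀ hΔ]
  exact h_riemann.trans_lt (mul_lt_mul_of_pos_right (half_lt_self he) hΔ)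

end Design

section StrongLaw

open scoped BigOperators

lemma tendsto_nat_sqrt_atTop : Tendsto Nat.sqrt atTop atTop :=
  tendsto_atTop.2 fun b => by
    filter_upwards [eventually_ge_atTop (b * b)] with n hn using Nat.le_sqrt.2 hn

lemma tendsto_expect_of_tendsto_blocks {x : ℕ → ℝ}
    (h_sq : Tendsto (fun m : ℕ => (∑ i ∈ Finset.range (m ^ 2), x i) / (m : ℝ) ^ 2) atTop (𝓝 0))
    (h_block : Tendsto (fun m : ℕ => (∑ i ∈ Finset.Ico (m ^ 2) ((m + 1) ^ 2), |x i|) / (m : ℝ) ^ 2)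
      atTop (𝓝 0)) :
    Tendsto (fun n => 𝔼 i ∈ Finset.range n, x i) atTop (𝓝 0) := by
  have h_bound := ((((tendsto_zero_iff_abs_tendsto_zero _).1 h_sq).add h_block).comp
    tendsto_nat_sqrt_atTop)
  rw [add_zero] at h_bound
  refine squeeze_zero_norm' ?_ h_bound
  filter_upwards [eventually_gt_atTop 0] with n hn
  have h_sqrt_pos : (0 : ℝ) < n.sqrt := Nat.cast_pos.2 (Nat.sqrt_pos.2 hn)
  have h_sqrt_le : (n.sqrt : ℝ) ^ 2 ≤ n := mod_cast n.sqrt_le'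
  rw [Finset.expect_eq_sum_div_card, Finset.card_range, Real.norm_eq_abs, abs_div, Nat.abs_cast]
  simp only [Function.comp_apply]
  rw [abs_div, abs_of_pos (pow_pos h_sqrt_pos 2), ← add_div]
  gcongr
  rw [← Finset.sum_range_add_sum_Ico _ n.sqrt_le']
  refine (abs_add_le _ _).trans (add_le_add_right ((Finset.abs_sum_le_sum_abs _ _).trans ?_) _)
  exact Finset.sum_le_sum_of_subset_of_nonneg (Finset.Ico_subset_Ico_right n.lt_succ_sqrt'.le)
    fun i _ _ => abs_nonneg _

variable {Ω : Type*} [MeasurableSpace Ω] {μ : Measure Ω}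

lemma ae_tendsto_zero_of_summable_integral_norm {E : Type*} [NormedAddCommGroup E]
    {f : ℕ → Ω → E} (hf : ∀ n, Integrable (f n) μ)
    (h_sum : Summable fun n => ∫ ω, ‖f n ω‖ ∂μ) :
    ∀ᵐ ω ∂μ, Tendsto (fun n => f n ω) atTop (𝓝 0) := by
  have h_tsum : ∑' n, eLpNorm (f n) 1 μ ≠ ⊤ := by
    simp only [eLpNorm_one_eq_lintegral_enorm, ← ofReal_integral_norm_eq_lintegral_enorm (hf _)]
    exact h_sum.tsum_ofReal_ne_top
  filter_upwards [summable_norm_of_tsum_eLpNorm_ne_top le_rfl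
    (fun n => (hf n).aestronglyMeasurable) h_tsum] with ω hω
  exact tendsto_zero_iff_norm_tendsto_zero.2 hω.tendsto_atTop_zero

lemma ae_tendsto_zero_of_integral_sq_le {Y : ℕ → Ω → ℝ} {b : ℕ → ℝ} (hY : ∀ n, MemLp (Y n) 2 μ)
    (hYb : ∀ n, ∫ ω, Y n ω ^ 2 ∂μ ≤ b n) (hb : Summable b) :
    ∀ᵐ ω ∂μ, Tendsto (fun n => Y n ω) atTop (𝓝 0) := by
  have h_sum : Summable fun n => ∫ ω, ‖Y n ω ^ 2‖ ∂μ := by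
    simp only [norm_pow, Real.norm_eq_abs, sq_abs]
    exact hb.of_nonneg_of_le (fun n => integral_nonneg fun ω => sq_nonneg _) hYb
  filter_upwards [ae_tendsto_zero_of_summable_integral_norm (fun n => (hY n).integrable_sq) h_sum]
    with ω hω
  refine (tendsto_zero_iff_abs_tendsto_zero _).2 ?_
  simpa only [Function.comp_def, Real.sqrt_sq_eq_abs, Real.sqrt_zero] using hω.sqrt

variable {X : ℕ → Ω → ℝ} {C : ℝ}

lemma integral_sq_sum_of_orthogonal {ι : Type*} {X : ι → Ω → ℝ} (hX : ∀ i, MemLp (X i) 2 μ)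
    (h_orth : Pairwise fun i j => ∫ ω, X i ω * X j ω ∂μ = 0) (s : Finset ι) :
    ∫ ω, (∑ i ∈ s, X i ω) ^ 2 ∂μ = ∑ i ∈ s, ∫ ω, X i ω ^ 2 ∂μ := by
  have h_int : ∀ i j, Integrable (fun ω => X i ω * X j ω) μ :=
    fun i j => (hX i).integrable_mul (hX j)
  simp only [sq, Finset.sum_mul_sum]
  rw [integral_finsetSum _ fun i _ => integrable_finsetSum _ fun j _ => h_int i j]
  refine Finset.sum_congr rfl fun i hi => ?_
  rw [integral_finsetSum _ fun j _ => h_int i j]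
  exact Finset.sum_eq_single_of_mem i hi fun j _ hj => h_orth hj.symm

lemma integral_sq_sum_abs_le {ι : Type*} {X : ι → Ω → ℝ} (hX : ∀ i, MemLp (X i) 2 μ)
    (hC : ∀ i, ∫ ω, X i ω ^ 2 ∂μ ≤ C) (s : Finset ι) :
    ∫ ω, (∑ i ∈ s, |X i ω|) ^ 2 ∂μ ≤ (s.card : ℝ) ^ 2 * C := by
  have h_int : ∀ i ∈ s, Integrable (fun ω => X i ω ^ 2) μ := fun i _ => (hX i).integrable_sq
  calc ∫ ω, (∑ i ∈ s, |X i ω|) ^ 2 ∂μ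
      ≤ ∫ ω, s.card * ∑ i ∈ s, X i ω ^ 2 ∂μ := by
        refine integral_mono (memLp_finsetSum s fun i _ => (hX i).abs).integrable_sq
          ((integrable_finsetSum s h_int).const_mul _) fun ω => ?_
        simpa only [sq_abs] using sq_sum_le_card_mul_sum_sq (s := s) (f := fun i => |X i ω|)
    _ = s.card * ∑ i ∈ s, ∫ ω, X i ω ^ 2 ∂μ := by
        rw [integral_const_mul, integral_finsetSum s h_int]
    _ ≤ s.card * (s.card • C) := by
        gcongr
        exact Finset.sum_le_card_nsmul s _ C fun i _ => hC i
    _ = (s.card : ℝ) ^ 2 * C := by rw [nsmul_eq_mul]; ring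

lemma integral_sq_sum_range_sq_div_le (hX : ∀ i, MemLp (X i) 2 μ) (hC : ∀ i, ∫ ω, X i ω ^ 2 ∂μ ≤ C)
    (h_orth : Pairwise fun i j => ∫ ω, X i ω * X j ω ∂μ = 0) (m : ℕ) :
    ∫ ω, ((∑ i ∈ Finset.range (m ^ 2), X i ω) / (m : ℝ) ^ 2) ^ 2 ∂μ
      ≤ C / (m : ℝ) ^ 2 := by
  simp only [div_pow]
  rw [integral_div, integral_sq_sum_of_orthogonal hX h_orth]
  calc _ ≤ ((m ^ 2 : ℕ) : ℝ) * C / ((m : ℝ) ^ 2) ^ 2 := by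
        gcongr
        simpa only [Finset.card_range, nsmul_eq_mul] using
          Finset.sum_le_card_nsmul (Finset.range (m ^ 2)) _ C fun i _ => hC i
    _ = C / (m : ℝ) ^ 2 := by push_cast; field_simp

lemma integral_sq_sum_block_div_le (hX : ∀ i, MemLp (X i) 2 μ) (hC : ∀ i, ∫ ω, X i ω ^ 2 ∂μ ≤ C)
    (m : ℕ) :
    ∫ ω, ((∑ i ∈ Finset.Ico (m ^ 2) ((m + 1) ^ 2), |X i ω|) / (m : ℝ) ^ 2) ^ 2 ∂μ
      ≤ 9 * C / (m : ℝ) ^ 2 := by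
  have hC₀ : 0 ≤ C := (integral_nonneg fun ω => sq_nonneg (X 0 ω)).trans (hC 0)
  simp only [div_pow]
  rw [integral_div]
  obtain rfl | hm := m.eq_zero_or_pos
  · simp
  have hm' : (1 : ℝ) ≤ m := Nat.one_le_cast.2 hm
  have h_card : ((Finset.Ico (m ^ 2) ((m + 1) ^ 2)).card : ℝ) ≤ 3 * m := by
    rw [Nat.card_Ico, Nat.cast_sub (by gcongr; exact m.le_succ)]
    push_cast
    linarith
  calc _ ≤ (3 * (m : ℝ)) ^ 2 * C / ((m : ℝ) ^ 2) ^ 2 := by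
        gcongr
        exact (integral_sq_sum_abs_le hX hC _).trans (by gcongr)
    _ = 9 * C / (m : ℝ) ^ 2 := by field_simp; ring

-- The squares `m ^ 2` are sparse enough for the mean squares of the averages along them to be
-- summable, and dense enough for the blocks between them to be negligible.
lemma ae_tendsto_expect_zero_of_orthogonal (hX : ∀ i, MemLp (X i) 2 μ)
    (hC : ∀ i, ∫ ω, X i ω ^ 2 ∂μ ≤ C)
    (h_orth : Pairwise fun i j => ∫ ω, X i ω * X j ω ∂μ = 0) :
    ∀ᵐ ω ∂μ, Tendsto (fun n => 𝔼 i ∈ Finset.range n, X i ω) atTop (𝓝 0) := by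
  have h_summable : ∀ c : ℝ, Summable fun m : ℕ => c / (m : ℝ) ^ 2 := fun c => by
    simpa only [mul_one_div] using (Real.summable_one_div_nat_pow.2 one_lt_two).mul_left c
  have h_sq : ∀ m : ℕ,
      MemLp (fun ω => (∑ i ∈ Finset.range (m ^ 2), X i ω) / (m : ℝ) ^ 2) 2 μ := fun m => by
    simpa only [div_eq_mul_inv] using (memLp_finsetSum _ fun i _ => hX i).mul_const _
  have h_block : ∀ m : ℕ, MemLp
      (fun ω => (∑ i ∈ Finset.Ico (m ^ 2) ((m + 1) ^ 2), |X i ω|) / (m : ℝ) ^ 2) 2 μ := fun m => by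
    simpa only [div_eq_mul_inv] using
      (memLp_finsetSum (f := fun i ω => |X i ω|) _ fun i _ => (hX i).abs).mul_const _
  filter_upwards [
    ae_tendsto_zero_of_integral_sq_le h_sq (integral_sq_sum_range_sq_div_le hX hC h_orth)
      (h_summable _),
    ae_tendsto_zero_of_integral_sq_le h_block (integral_sq_sum_block_div_le hX hC) (h_summable _)]
    with ω h_sqω h_blockω using tendsto_expect_of_tendsto_blocks h_sqω h_blockω

end StrongLaw

/-- The path of the AR(1) process with coefficient `φ`, innovations `u` and value `0` at time `0`;
unlike the stationary solution, it is a function of finitely many innovations. -/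
noncomputable def arPath (φ : ℝ) (u : ℕ → ℝ) : ℕ → ℝ
  | 0 => 0
  | k + 1 => φ * arPath φ u k + u (k + 1)

section AutoRegression

open scoped BigOperators

section Path

variable {φ s : ℝ} {u : ℕ → ℝ}

lemma tendsto_expect_arPath (hφ : |φ| < 1)
    (hu : Tendsto (fun n => 𝔼 i ∈ Finset.range n, u (i + 1)) atTop (𝓝 0))
    (hu_sq : Tendsto (fun n => 𝔼 i ∈ Finset.range n, u (i + 1) ^ 2) atTop (𝓝 s)) :
    Tendsto (fun n => 𝔼 i ∈ Finset.range n, arPath φ u (i + 1)) atTop (𝓝 0) := by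
  rw [← zero_div (1 - φ)]
  exact tendsto_expect_of_recursion (lt_of_abs_lt hφ).ne (fun i => rfl)
    (tendsto_div_zero_of_tendsto_sq_div_zero
      (tendsto_sq_div_zero_of_recursion hφ (fun k => rfl) hu_sq)) hu

lemma tendsto_expect_arPath_sq (hφ : |φ| < 1)
    (hu_sq : Tendsto (fun n => 𝔼 i ∈ Finset.range n, u (i + 1) ^ 2) atTop (𝓝 s))
    (h_cross : Tendsto (fun n => 𝔼 i ∈ Finset.range n, arPath φ u i * u (i + 1)) atTop (𝓝 0)) :
    Tendsto (fun n => 𝔼 i ∈ Finset.range n, arPath φ u (i + 1) ^ 2) atTop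
      (𝓝 (s / (1 - φ ^ 2))) := by
  refine tendsto_expect_of_recursion (y := fun k => arPath φ u k ^ 2)
    (v := fun i => 2 * φ * (arPath φ u i * u (i + 1)) + u (i + 1) ^ 2)
    ((sq_lt_one_iff_abs_lt_one φ).2 hφ).ne (fun i => ?_)
    (tendsto_sq_div_zero_of_recursion hφ (fun k => rfl) hu_sq) ?_
  · rw [arPath]
    ring
  · simpa only [Finset.expect_add_distrib, ← Finset.mul_expect, mul_zero, zero_add] using
      (h_cross.const_mul (2 * φ)).add hu_sq

end Path

variable {Ω : Type*} [MeasurableSpace Ω] {μ : Measure Ω} {U : ℕ → Ω → ℝ} {φ s : ℝ} {i j : ℕ}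

lemma measurable_natural_of_le (hU : ∀ j, StronglyMeasurable (U j)) (hij : i ≤ j) :
    Measurable[Filtration.natural U hU j] (U i) :=
  ((Filtration.stronglyAdapted_natural hU i).mono ((Filtration.natural U hU).mono hij)).measurable

lemma measurable_natural_arPath (hU : ∀ j, StronglyMeasurable (U j)) (hij : i ≤ j) :
    Measurable[Filtration.natural U hU j] (fun ω => arPath φ (U · ω) i) := by
  induction i with
  | zero => exact measurable_const
  | succ i ih =>
    exact ((ih (Nat.le_of_succ_le hij)).const_mul φ).add (measurable_natural_of_le hU hij)

lemma memLp_arPath [IsFiniteMeasure μ] (hU : ∀ j, MemLp (U j) 2 μ) (i : ℕ) :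
    MemLp (fun ω => arPath φ (U · ω) i) 2 μ := by
  induction i with
  | zero => exact memLp_const 0
  | succ i ih => exact (ih.const_mul φ).add (hU (i + 1))

lemma indepFun_succ_of_measurable_natural (hU : ∀ j, StronglyMeasurable (U j))
    (h_indep : iIndepFun U μ) {f : Ω → ℝ} (hf : Measurable[Filtration.natural U hU j] f) :
    IndepFun f (U (j + 1)) μ := by
  rw [IndepFun_iff_Indep]
  exact indep_of_indep_of_le_left
    (h_indep.indep_comap_natural_of_lt hU j.lt_succ_self).symm hf.comap_le

lemma integral_mul_succ_eq_zero (hU : ∀ j, StronglyMeasurable (U j)) (h_indep : iIndepFun U μ)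
    (h_mean : ∀ j, ∫ ω, U j ω ∂μ = 0) {f : Ω → ℝ}
    (hf : Measurable[Filtration.natural U hU j] f) : ∫ ω, f ω * U (j + 1) ω ∂μ = 0 := by
  rw [(indepFun_succ_of_measurable_natural hU h_indep hf).integral_fun_mul_eq_mul_integral
    (hf.mono ((Filtration.natural U hU).le j) le_rfl).aestronglyMeasurable
    (hU (j + 1)).aestronglyMeasurable, h_mean, mul_zero]

lemma integral_arPath_sq_le (hU : ∀ j, StronglyMeasurable (U j)) (h_indep : iIndepFun U μ)
    (hU_memLp : ∀ j, MemLp (U j) 2 μ) (h_mean : ∀ j, ∫ ω, U j ω ∂μ = 0)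
    (h_var : ∀ j, ∫ ω, U j ω ^ 2 ∂μ = s) (hφ : |φ| < 1) (i : ℕ) :
    ∫ ω, arPath φ (U · ω) i ^ 2 ∂μ ≤ s / (1 - φ ^ 2) := by
  have := h_indep.isProbabilityMeasure
  have hφ' : 0 < 1 - φ ^ 2 := sub_pos.2 ((sq_lt_one_iff_abs_lt_one φ).2 hφ)
  have hs : 0 ≤ s := h_var 0 ▸ integral_nonneg fun ω => sq_nonneg _
  induction i with
  | zero =>
    simp only [arPath, zero_pow two_ne_zero, integral_zero]
    positivity
  | succ i ih =>
    have h_sq : Integrable (fun ω => φ ^ 2 * arPath φ (U · ω) i ^ 2) μ :=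
      (memLp_arPath hU_memLp i).integrable_sq.const_mul _
    have h_cross : Integrable (fun ω => 2 * φ * (arPath φ (U · ω) i * U (i + 1) ω)) μ :=
      ((memLp_arPath hU_memLp i).integrable_mul (hU_memLp (i + 1))).const_mul _
    have h_sum : Integrable (fun ω => φ ^ 2 * arPath φ (U · ω) i ^ 2
        + 2 * φ * (arPath φ (U · ω) i * U (i + 1) ω)) μ := h_sq.add h_cross
    calc ∫ ω, arPath φ (U · ω) (i + 1) ^ 2 ∂μ
        = ∫ ω, (φ ^ 2 * arPath φ (U · ω) i ^ 2 + 2 * φ * (arPath φ (U · ω) i * U (i + 1) ω)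
            + U (i + 1) ω ^ 2) ∂μ := by
          congr with ω
          rw [arPath]
          ring
      _ = φ ^ 2 * ∫ ω, arPath φ (U · ω) i ^ 2 ∂μ + s := by
          rw [integral_add h_sum (hU_memLp (i + 1)).integrable_sq,
            integral_add h_sq h_cross, integral_const_mul, integral_const_mul,
            integral_mul_succ_eq_zero hU h_indep h_mean (measurable_natural_arPath hU le_rfl),
            h_var, mul_zero, add_zero]
      _ ≤ φ ^ 2 * (s / (1 - φ ^ 2)) + s := by gcongr
      _ = s / (1 - φ ^ 2) := by field_simp; ring

lemma ae_tendsto_expect_arPath_mul_innovation (hU : ∀ j, StronglyMeasurable (U j))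
    (h_indep : iIndepFun U μ) (hU_memLp : ∀ j, MemLp (U j) 2 μ)
    (h_mean : ∀ j, ∫ ω, U j ω ∂μ = 0) (h_var : ∀ j, ∫ ω, U j ω ^ 2 ∂μ = s) (hφ : |φ| < 1) :
    ∀ᵐ ω ∂μ, Tendsto (fun n => 𝔼 i ∈ Finset.range n, arPath φ (U · ω) i * U (i + 1) ω) atTop
      (𝓝 0) := by
  have := h_indep.isProbabilityMeasure
  have h_adapted : ∀ i j, i ≤ j →
      Measurable[Filtration.natural U hU j] (fun ω => arPath φ (U · ω) i) :=
    fun i j hij => measurable_natural_arPath hU hij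
  have h_indep_sq : ∀ i,
      IndepFun (fun ω => arPath φ (U · ω) i ^ 2) (fun ω => U (i + 1) ω ^ 2) μ := fun i =>
    (indepFun_succ_of_measurable_natural hU h_indep (h_adapted i i le_rfl)).comp
      (measurable_id.pow_const 2) (measurable_id.pow_const 2)
  have h_meas : ∀ i, AEStronglyMeasurable (fun ω => arPath φ (U · ω) i) μ :=
    fun i => (memLp_arPath hU_memLp i).aestronglyMeasurable
  have h_orth : ∀ i j, i < j →
      ∫ ω, arPath φ (U · ω) i * U (i + 1) ω * (arPath φ (U · ω) j * U (j + 1) ω) ∂μ = 0 :=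
    fun i j hij => by
      have h := integral_mul_succ_eq_zero hU h_indep h_mean
        (((h_adapted i j hij.le).mul (measurable_natural_of_le hU hij)).mul
          (h_adapted j j le_rfl))
      simpa only [Pi.mul_apply, mul_assoc] using h
  have hs : 0 ≤ s := h_var 0 ▸ integral_nonneg fun ω => sq_nonneg _
  refine ae_tendsto_expect_zero_of_orthogonal (C := s / (1 - φ ^ 2) * s) (fun i => ?_) (fun i => ?_)
    (fun i j hij => ?_)
  · refine (memLp_two_iff_integrable_sq ((h_meas i).mul (hU (i + 1)).aestronglyMeasurable)).2 ?_
    refine ((h_indep_sq i).integrable_mul (memLp_arPath hU_memLp i).integrable_sq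
      (hU_memLp (i + 1)).integrable_sq).congr (.of_forall fun ω => ?_)
    simp only [Pi.mul_apply, mul_pow]
  · simp only [mul_pow]
    rw [(h_indep_sq i).integral_fun_mul_eq_mul_integral ((h_meas i).pow 2)
      ((hU (i + 1)).aestronglyMeasurable.pow 2), h_var]
    exact mul_le_mul_of_nonneg_right
      (integral_arPath_sq_le hU h_indep hU_memLp h_mean h_var hφ i) hs
  · obtain h_lt | h_lt := hij.lt_or_gt
    · exact h_orth i j h_lt
    · simp_rw [← h_orth j i h_lt, mul_comm]

lemma ae_tendsto_expect_comp_succ {X : Ω → ℝ} {f : ℝ → ℝ} (hf : Measurable f)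
    (hf_int : Integrable (fun ω => f (X ω)) μ) (h_indep : iIndepFun U μ)
    (h_ident : ∀ j, IdentDistrib (U j) X μ μ) :
    ∀ᵐ ω ∂μ, Tendsto (fun n => 𝔼 i ∈ Finset.range n, f (U (i + 1) ω)) atTop
      (𝓝 (∫ ω, f (X ω) ∂μ)) := by
  have h_ident_comp : ∀ j, IdentDistrib (fun ω => f (U j ω)) (fun ω => f (X ω)) μ μ :=
    fun j => (h_ident j).comp hf
  filter_upwards [strong_law_ae_real (fun i ω => f (U (i + 1) ω))
    ((h_ident_comp 1).integrable_iff.2 hf_int)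
    (fun i j hij => (h_indep.indepFun (Nat.succ_injective.ne hij)).comp hf hf)
    (fun i => (h_ident_comp _).trans (h_ident_comp _).symm)] with ω h
  rw [(h_ident_comp _).integral_eq] at h
  simpa only [Finset.expect_eq_sum_div_card, Finset.card_range] using h

lemma ae_tendsto_expect_arPath_and_sq {X : Ω → ℝ} (hU : ∀ j, StronglyMeasurable (U j))
    (h_indep : iIndepFun U μ) (h_ident : ∀ j, IdentDistrib (U j) X μ μ)
    (h_memLp : MemLp X 2 μ) (h_mean : ∫ ω, X ω ∂μ = 0) (h_var : ∫ ω, X ω ^ 2 ∂μ = s)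
    (hφ : |φ| < 1) :
    ∀ᵐ ω ∂μ, Tendsto (fun n => 𝔼 i ∈ Finset.range n, arPath φ (U · ω) (i + 1)) atTop (𝓝 0) ∧
      Tendsto (fun n => 𝔼 i ∈ Finset.range n, arPath φ (U · ω) (i + 1) ^ 2) atTop
        (𝓝 (s / (1 - φ ^ 2))) := by
  have := h_indep.isProbabilityMeasure
  have h_memLp_all : ∀ j, MemLp (U j) 2 μ := fun j => (h_ident j).memLp_iff.2 h_memLp
  have h_mean_all : ∀ j, ∫ ω, U j ω ∂μ = 0 := fun j => (h_ident j).integral_eq.trans h_mean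
  have h_var_all : ∀ j, ∫ ω, U j ω ^ 2 ∂μ = s :=
    fun j => ((h_ident j).comp (measurable_id.pow_const 2)).integral_eq.trans h_var
  filter_upwards [
    ae_tendsto_expect_comp_succ measurable_id (h_memLp.integrable one_le_two) h_indep h_ident,
    ae_tendsto_expect_comp_succ (measurable_id.pow_const 2) h_memLp.integrable_sq h_indep h_ident,
    ae_tendsto_expect_arPath_mul_innovation hU h_indep h_memLp_all h_mean_all h_var_all hφ]
    with ω hu hu_sq h_cross
  simp only [id_eq, h_mean, h_var] at hu hu_sq
  exact ⟨tendsto_expect_arPath hφ hu hu_sq, tendsto_expect_arPath_sq hφ hu_sq h_cross⟩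

end AutoRegression

section Criterion

open scoped BigOperators

lemma tendsto_expect_designPoint_add_sq {Δ V : ℝ} {h : ℝ → ℝ} {e : ℕ → ℝ} (hΔ : 0 < Δ)
    (hh : ContinuousOn h (Icc 0 Δ))
    (he : Tendsto (fun n => 𝔼 i ∈ Finset.range n, e i) atTop (𝓝 0))
    (he_sq : Tendsto (fun n => 𝔼 i ∈ Finset.range n, e i ^ 2) atTop (𝓝 V)) :
    Tendsto (fun n => 𝔼 i ∈ Finset.range n, (h (designPoint Δ n i) + e i) ^ 2) atTop
      (𝓝 (V + 1 / Δ * ∫ w in 0..Δ, h w ^ 2)) := by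
  rw [add_comm V]
  exact tendsto_expect_add_sq (tendsto_expect_designPoint hΔ (hh.pow 2)) he_sq
    (tendsto_expect_continuous_mul hΔ.le hh he
      (eventually_expect_abs_le_of_tendsto_expect_sq he_sq))

lemma Qupd_eq_expect {Ω : Type*} (Δ γ₀ : ℝ) (x z g₀ : ℝ → ℝ) (ε : ℤ → Ω → ℝ) (lg : ℝ → ℝ) (n : ℕ)
    (γ : ℝ) (ω : Ω) :
    Qupd Δ γ₀ x z g₀ ε lg n γ ω = 𝔼 i ∈ Finset.range n,
      (Real.log (1 + γ₀ * x (designPoint Δ n i)) - Real.log (1 + γ * x (designPoint Δ n i))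
        + ε (i + 1 : ℕ) ω
        + (Real.log (g₀ (z (designPoint Δ n i))) - lg (z (designPoint Δ n i)))) ^ 2 := by
  have h_shift : Finset.Icc 1 n = Finset.Ico (0 + 1) (n + 1) := rfl
  rw [Qupd, Finset.expect_eq_sum_div_card, Finset.card_range, one_div_mul_eq_div, h_shift,
    ← Finset.sum_Ico_add', ← Finset.range_eq_Ico]
  congr 1
  refine Finset.sum_congr rfl fun i _ => ?_
  rw [designPoint]
  ring

lemma one_add_mul_pos {a m M t : ℝ} (hm : 0 < m) (hM : 0 < M) (ha : a ∈ Icc (-(1 / M)) (1 / m))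
    (ht : t ∈ Ioo (-m) M) : 0 < 1 + a * t := by
  have h_lower : -1 ≤ a * M := by
    simpa [hM.ne'] using mul_le_mul_of_nonneg_right ha.1 hM.le
  have h_upper : a * m ≤ 1 := by
    simpa [hm.ne'] using mul_le_mul_of_nonneg_right ha.2 hm.le
  obtain h | rfl | h := lt_trichotomy a 0
  · linarith [mul_lt_mul_of_neg_left ht.2 h]
  · norm_num
  · linarith [mul_lt_mul_of_pos_left ht.1 h]

lemma memLp_two_of_integral_sq_ne_zero {Ω : Type*} [MeasurableSpace Ω] {μ : Measure Ω} {X : Ω → ℝ}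
    (hX : AEStronglyMeasurable X μ) (h_ne : ∫ ω, X ω ^ 2 ∂μ ≠ 0) : MemLp X 2 μ :=
  (memLp_two_iff_integrable_sq hX).2 (.of_integral_ne_zero h_ne)

lemma tendstoUniformlyOn_of_abs_sub_lt {β : Type*} {F : ℕ → β → ℝ} {f : β → ℝ} {S : Set β}
    (h : ∀ e > 0, ∃ N, ∀ n ≥ N, ∀ t ∈ S, |F n t - f t| < e) :
    TendstoUniformlyOn F f atTop S := by
  refine Metric.tendstoUniformlyOn_iff.2 fun e he => ?_
  filter_upwards [eventually_atTop.2 (h e he)] with n hn t ht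
  rw [dist_comm]
  exact hn t ht

lemma recursion_of_hasSum {φ : ℝ} {u e : ℤ → ℝ}
    (he : ∀ i : ℤ, HasSum (fun j : ℕ => φ ^ j * u (i - j)) (e i)) (k : ℤ) :
    e (k + 1) = φ * e k + u (k + 1) := by
  have h_tail := (hasSum_nat_add_iff' 1).2 (he (k + 1))
  have h_mul : HasSum (fun j : ℕ => φ ^ (j + 1) * u (k + 1 - (j + 1 : ℕ))) (φ * e k) := by
    refine ((he k).mul_left φ).congr_fun fun j => ?_
    rw [Nat.cast_succ, add_sub_add_right_eq_sub, pow_succ', mul_assoc]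
  simpa [sub_eq_iff_eq_add] using h_tail.unique h_mul

theorem stmt10_general {Ω : Type*} [MeasurableSpace Ω] {μ : Measure Ω} {Δ : ℝ} (hΔ : 0 < Δ)
    {x z g₀ : ℝ → ℝ} (hx : ContinuousOn x (Icc 0 Δ))
    (_hg₀ : ∀ w ∈ Icc 0 Δ, 0 < g₀ (z w)) {U : ℕ → Ω → ℝ} {X : Ω → ℝ}
    (hU : ∀ j, Measurable (U j)) (hU_indep : iIndepFun U μ)
    (hU_ident : ∀ j, IdentDistrib (U j) X μ μ) (hX_memLp : MemLp X 2 μ)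
    (hX_mean : ∫ ω, X ω ∂μ = 0) {σ : ℝ} (hX_var : ∫ ω, X ω ^ 2 ∂μ = σ ^ 2)
    {φ : ℝ} (hφ : |φ| < 1) {ε : ℤ → Ω → ℝ}
    (hε : ∀ᵐ ω ∂μ, ∀ k : ℕ, ε (k + 1 : ℕ) ω = φ * ε k ω + U (k + 1) ω)
    {γ₀ : ℝ} (hγ₀ : ∀ w ∈ Icc 0 Δ, 0 < 1 + γ₀ * x w) {lg : ℕ → Ω → ℝ → ℝ}
    (hlg : ∀ᵐ ω ∂μ,
      TendstoUniformlyOn (lg · ω) (fun t => Real.log (g₀ t)) atTop (z '' Icc 0 Δ)) :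
    ∀ᵐ ω ∂μ, ∀ γ : ℝ, (∀ w ∈ Icc 0 Δ, 0 < 1 + γ * x w) →
      Tendsto (fun n => Qupd Δ γ₀ x z g₀ ε (lg n ω) n γ ω) atTop
        (𝓝 (σ ^ 2 / (1 - φ ^ 2) + 1 / Δ * ∫ w in 0..Δ,
          (Real.log (1 + γ₀ * x w) - Real.log (1 + γ * x w)) ^ 2)) := by
  have h_log_cont : ∀ γ : ℝ, (∀ w ∈ Icc 0 Δ, 0 < 1 + γ * x w) →
      ContinuousOn (fun w => Real.log (1 + γ * x w)) (Icc 0 Δ) := fun γ hγ =>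
    (continuousOn_const.add (hx.const_mul γ)).log fun w hw => (hγ w hw).ne'
  filter_upwards [hε, hlg, ae_tendsto_expect_arPath_and_sq (fun j => (hU j).stronglyMeasurable)
    hU_indep hU_ident hX_memLp hX_mean hX_var hφ] with ω h_rec h_unif ⟨h_path, h_path_sq⟩ γ hγ
  have h_zero_start := tendsto_expect_designPoint_add_sq hΔ
    ((h_log_cont γ₀ hγ₀).sub (h_log_cont γ hγ)) h_path h_path_sq
  have h_initial := tendsto_expect_sq_sub_of_recursion (y := fun k => ε k ω)
    (u := (U · ω)) (w := arPath φ (U · ω)) hφ h_rec fun k => rfl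
  have h_estimate := tendsto_expect_sq_sub_of_tendstoUniformlyOn
    (s := Finset.range) (t := fun n i => z (designPoint Δ n i)) h_unif fun n i hi =>
      mem_image_of_mem z (designPoint_mem_Icc hΔ.le (Finset.mem_range.1 hi))
  refine (tendsto_expect_add_sq_of_negligible
    (tendsto_expect_add_sq_of_negligible h_zero_start h_initial) h_estimate).congr fun n => ?_
  rw [Qupd_eq_expect]
  refine Finset.expect_congr rfl fun i _ => ?_
  simp only [Pi.sub_apply]
  ring

end Criterion

/-- if `sup_{t∈[0,A]} |log g̃ₙ(t) - log g₀(t)| → 0` almost surely, then for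
every fixed `γ ∈ Γ` the criterion `Q̃ₙ(γ)` converges almost surely to
`σ²/(1-φ²) + (1/Δ)∫₀^Δ (log(1+γ₀x(w)) - log(1+γx(w)))² dw`. -/
theorem stmt10
    {Ω : Type*} [MeasurableSpace Ω] (μ : Measure Ω) [IsProbabilityMeasure μ]
    (Δ A xm xM : ℝ) (hΔ : 0 < Δ) (hA : 0 < A) (hxm : 0 < xm) (hxM : 0 < xM)
    (x z : ℝ → ℝ)
    (hxcont : ContinuousOn x (Icc 0 Δ))
    (hxrange : ∀ w ∈ Icc (0 : ℝ) Δ, x w ∈ Ioo (-xm) xM)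
    (hzcont : ContinuousOn z (Icc 0 Δ))
    (hzrange : ∀ w ∈ Icc (0 : ℝ) Δ, z w ∈ Icc 0 A)
    (hzmono : StrictMonoOn z (Icc 0 Δ))
    (U : ℤ → Ω → ℝ) (hUmeas : ∀ j, Measurable (U j))
    (hUindep : iIndepFun U μ)
    (hUident : ∀ j, μ.map (U j) = μ.map (U 0))
    (σ : ℝ) (hσ : 0 < σ)
    (hUmean : ∫ ω, U 0 ω ∂μ = 0)
    (hUvar : ∫ ω, (U 0 ω) ^ 2 ∂μ = σ ^ 2)
    (hU8 : Integrable (fun ω => (U 0 ω) ^ 8) μ)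
    (φ : ℝ) (hφ0 : φ ≠ 0) (hφ1 : |φ| < 1)
    (ε : ℤ → Ω → ℝ) (hεmeas : ∀ i, Measurable (ε i))
    (hεsum : ∀ᵐ ω ∂μ, ∀ i : ℤ, HasSum (fun j : ℕ => φ ^ j * U (i - (j : ℤ)) ω) (ε i ω))
    (γ₀ : ℝ) (hγ₀ : γ₀ ∈ Ioo (-(1 / xM)) (1 / xm))
    (g₀ : ℝ → ℝ) (c : ℝ) (hc : 0 < c)
    (hg₀lb : ∀ t ∈ Icc (0 : ℝ) A, c ≤ g₀ t)
    (hg₀cont : ContinuousOn g₀ (Icc 0 A))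
    (hg₀anti : AntitoneOn g₀ (Icc 0 A))
    (gtil : ℕ → Ω → ℝ → ℝ)
    (hgtilpos : ∀ n ω, ∀ t ∈ Icc (0 : ℝ) A, 0 < gtil n ω t)
    (hgtilcont : ∀ n ω, ContinuousOn (gtil n ω) (Icc 0 A))
    (hgtilconv : ∀ᵐ ω ∂μ, ∀ e > (0 : ℝ), ∃ N : ℕ, ∀ n ≥ N, ∀ t ∈ Icc (0 : ℝ) A,
      |Real.log (gtil n ω t) - Real.log (g₀ t)| < e)
    (γ : ℝ) (hγ : γ ∈ Icc (-(1 / xM)) (1 / xm)) :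
    ∀ᵐ ω ∂μ, Tendsto
      (fun n : ℕ => Qupd Δ γ₀ x z g₀ ε (fun t => Real.log (gtil n ω t)) n γ ω)
      atTop
      (𝓝 (σ ^ 2 / (1 - φ ^ 2) +
        (1 / Δ) * ∫ w in (0 : ℝ)..Δ,
          (Real.log (1 + γ₀ * x w) - Real.log (1 + γ * x w)) ^ 2)) := by
  have h_pos : ∀ a ∈ Icc (-(1 / xM)) (1 / xm), ∀ w ∈ Icc 0 Δ, 0 < 1 + a * x w :=
    fun a ha w hw => one_add_mul_pos hxm hxM ha (hxrange w hw)
  have hU_ident : ∀ j, IdentDistrib (U j) (U 0) μ μ :=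
    fun j => ⟨(hUmeas j).aemeasurable, (hUmeas 0).aemeasurable, hUident j⟩
  have hU_memLp : MemLp (U 0) 2 μ :=
    memLp_two_of_integral_sq_ne_zero (hUmeas 0).aestronglyMeasurable (hUvar ▸ pow_ne_zero 2 hσ.ne')
  have hε : ∀ᵐ ω ∂μ, ∀ k : ℕ, ε (k + 1 : ℕ) ω = φ * ε k ω + U (k + 1 : ℕ) ω := by
    filter_upwards [hεsum] with ω h k using mod_cast recursion_of_hasSum (u := (U · ω)) h k
  have hlg : ∀ᵐ ω ∂μ, TendstoUniformlyOn (fun n t => Real.log (gtil n ω t))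
      (fun t => Real.log (g₀ t)) atTop (z '' Icc 0 Δ) := by
    filter_upwards [hgtilconv] with ω h
    exact (tendstoUniformlyOn_of_abs_sub_lt h).mono (image_subset_iff.2 hzrange)
  filter_upwards [stmt10_general (U := fun k : ℕ => U k)
    (lg := fun n ω t => Real.log (gtil n ω t)) hΔ hxcont
    (fun w hw => hc.trans_le (hg₀lb _ (hzrange w hw))) (fun j => hUmeas j)
    (hUindep.precomp Nat.cast_injective) (fun j => hU_ident j) hU_memLp hUmean hUvar hφ1 hε
    (h_pos γ₀ (Ioo_subset_Icc_self hγ₀)) hlg] with ω h using h γ (h_pos γ hγ)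
end

section
/- Let (a_{n,i})_{1≤i≤n, n≥1} be a triangular array of random variables on the same probability space such that sup_{1≤i≤n} |a_{n,i}| → 0 almost surely as n→∞. Then (1/n)·Σ_{i=2}^n (ε_i + a_{n,i})·(ε_{i−1} + a_{n,i−1}) converges to φ·σ²/(1−φ²) almost surely as n→∞. -/
open MeasureTheory ProbabilityTheory Filter Set Topology

/-!
Along almost every path the argument is purely deterministic and only uses that the innovations
`w` have Cesàro-convergent squares and Cesàro-null products `w i * w (i + k)`, `k ≥ 1`; the latter
is the strong law for `k`-dependent sequences, which follows from the independent case by splitting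
into residue classes.

Given `e (i + 1) = φ * e i + w i`, the sums `V k n = ∑_{i<n} w (i + k) * e i` satisfy
`V k (n + 1) = φ * V (k + 1) n + o(n)`. Iterating improves the a priori bound `V k n = O(n)`,
uniform in `k`, by a factor close to `|φ|` each time, so `V k n = o(n)`. Squaring the recursion,
`∑_{i<n} e i ^ 2` satisfies such a relation with factor `φ ^ 2`, which yields its growth rate, and
multiplying the recursion by `e i` gives the lag-one average. The perturbation contributes `o(n)`
because `∑_{i<n} |e i| = O(n)`.
-/

open Asymptotics Finset

section CesaroLimit

theorem isLittleO_const_natCast {E : Type*} [NormedAddCommGroup E] (c : E) :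
    (fun _ : ℕ ↦ c) =o[atTop] fun n : ℕ ↦ (n : ℝ) :=
  isLittleO_const_left.2 <| .inr <| tendsto_norm_atTop_atTop.comp tendsto_natCast_atTop_atTop

variable {E : Type*} [NormedAddCommGroup E] [NormedSpace ℝ E] {f : ℕ → E} {c : E}

/-- The Cesàro means `(f 0 + ⋯ + f (n - 1)) / n` of the sequence `f` tend to `c`. This is the mode
of convergence of the time averages in the strong law of large numbers. -/
def HasCesaroLimit (f : ℕ → E) (c : E) : Prop :=
  Tendsto (fun n : ℕ ↦ (n : ℝ)⁻¹ • ∑ i ∈ range n, f i) atTop (𝓝 c)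

theorem tendsto_inv_smul_iff_isLittleO {F : ℕ → E} :
    Tendsto (fun n : ℕ ↦ (n : ℝ)⁻¹ • F n) atTop (𝓝 c) ↔
      (fun n : ℕ ↦ F n - (n : ℝ) • c) =o[atTop] fun n : ℕ ↦ (n : ℝ) := by
  rw [← tendsto_sub_nhds_zero_iff, ← isLittleO_norm_left, isLittleO_iff_tendsto' (by
    filter_upwards [eventually_ne_atTop 0] with n hn h0
    exact absurd h0 (Nat.cast_ne_zero.2 hn)), tendsto_zero_iff_norm_tendsto_zero]
  refine tendsto_congr' ?_
  filter_upwards [eventually_ne_atTop 0] with n hn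
  have hn' : (n : ℝ) ≠ 0 := Nat.cast_ne_zero.2 hn
  rw [div_eq_inv_mul, ← inv_smul_smul₀ hn' c, ← smul_sub, norm_smul, norm_inv, Real.norm_natCast,
    inv_smul_smul₀ hn' c]

theorem hasCesaroLimit_iff_isLittleO :
    HasCesaroLimit f c ↔
      (fun n : ℕ ↦ ∑ i ∈ range n, (f i - c)) =o[atTop] fun n : ℕ ↦ (n : ℝ) := by
  simp only [HasCesaroLimit, tendsto_inv_smul_iff_isLittleO, sum_sub_distrib, sum_const, card_range,
    Nat.cast_smul_eq_nsmul]

theorem hasCesaroLimit_zero_iff_isLittleO :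
    HasCesaroLimit f 0 ↔ (fun n : ℕ ↦ ∑ i ∈ range n, f i) =o[atTop] fun n : ℕ ↦ (n : ℝ) := by
  simp only [hasCesaroLimit_iff_isLittleO, sub_zero]

theorem HasCesaroLimit.isBigOWith_sum (h : HasCesaroLimit f c) {C : ℝ} (hC : ‖c‖ < C) :
    IsBigOWith C atTop (fun n : ℕ ↦ ∑ i ∈ range n, f i) fun n : ℕ ↦ (n : ℝ) := by
  have hc : IsBigOWith ‖c‖ atTop (fun n : ℕ ↦ (n : ℝ) • c) fun n : ℕ ↦ (n : ℝ) :=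
    .of_bound (.of_forall fun n ↦ by rw [norm_smul, mul_comm])
  simpa only [add_sub_cancel] using
    hc.add_isLittleO (tendsto_inv_smul_iff_isLittleO.1 h) hC

theorem HasCesaroLimit.isBigO_sum (h : HasCesaroLimit f c) :
    (fun n : ℕ ↦ ∑ i ∈ range n, f i) =O[atTop] fun n : ℕ ↦ (n : ℝ) :=
  (h.isBigOWith_sum (lt_add_one ‖c‖)).isBigO

theorem HasCesaroLimit.comp_add_right (h : HasCesaroLimit f c) (k : ℕ) :
    HasCesaroLimit (fun i ↦ f (i + k)) c := by
  rw [hasCesaroLimit_iff_isLittleO] at h ⊢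
  have hshift : (fun n : ℕ ↦ ((n + k : ℕ) : ℝ)) =O[atTop] fun n : ℕ ↦ (n : ℝ) := by
    simpa only [Nat.cast_add] using (isBigO_refl _ _).add (isLittleO_const_natCast (k : ℝ)).isBigO
  refine (((h.comp_tendsto (tendsto_add_atTop_nat k)).trans_isBigO hshift).sub
    (isLittleO_const_natCast (∑ i ∈ range k, (f i - c)))).congr_left fun n ↦ ?_
  rw [Function.comp_apply, add_comm n k, sum_range_add, add_sub_cancel_left]
  simp only [add_comm k]

/-- `(n + (d - 1 - r)) / d` is the number of `i < n` congruent to `r < d` modulo `d`. -/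
theorem sum_range_eq_sum_residues {M : Type*} [AddCommMonoid M] {d : ℕ} (hd : d ≠ 0) (f : ℕ → M)
    (n : ℕ) :
    ∑ i ∈ range n, f i =
      ∑ r ∈ range d, ∑ m ∈ range ((n + (d - 1 - r)) / d), f (d * m + r) := by
  have hpos := Nat.pos_of_ne_zero hd
  rw [← sum_fiberwise_of_maps_to fun i _ ↦ mem_range.2 (Nat.mod_lt i hpos)]
  refine sum_congr rfl fun r hr ↦ ?_
  have hr := mem_range.1 hr
  have hlt (m : ℕ) : m < (n + (d - 1 - r)) / d ↔ d * m + r < n := by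
    rw [← Nat.succ_le_iff, Nat.le_div_iff_mul_le hpos, Nat.succ_mul, mul_comm]
    omega
  refine sum_nbij' (· / d) (fun m ↦ d * m + r) (fun i hi ↦ ?_) (fun m hm ↦ ?_) (fun i hi ↦ ?_)
    (fun m _ ↦ ?_) fun i hi ↦ ?_
  · obtain ⟨hin, hir⟩ := mem_filter.1 hi
    rw [Finset.mem_range, hlt, ← hir, Nat.div_add_mod]
    exact mem_range.1 hin
  · rw [mem_filter, Finset.mem_range, ← hlt, Nat.mul_add_mod, Nat.mod_eq_of_lt hr]
    exact ⟨mem_range.1 hm, rfl⟩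
  · rw [← (mem_filter.1 hi).2, Nat.div_add_mod]
  · rw [Nat.mul_add_div hpos, Nat.div_eq_of_lt hr, add_zero]
  · rw [← (mem_filter.1 hi).2, Nat.div_add_mod]

theorem HasCesaroLimit.of_residues {d : ℕ} (hd : d ≠ 0)
    (h : ∀ r < d, HasCesaroLimit (fun m ↦ f (d * m + r)) c) : HasCesaroLimit f c := by
  rw [hasCesaroLimit_iff_isLittleO]
  simp only [sum_range_eq_sum_residues hd fun i ↦ f i - c]
  refine IsLittleO.fun_sum fun r hr ↦ ?_
  have hcount : Tendsto (fun n ↦ (n + (d - 1 - r)) / d) atTop atTop :=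
    (Nat.tendsto_div_const_atTop hd).comp (tendsto_add_atTop_nat _)
  have hle (n : ℕ) : (n + (d - 1 - r)) / d ≤ n := by
    have hpos := Nat.pos_of_ne_zero hd
    refine Nat.lt_succ_iff.1 (Nat.div_lt_of_lt_mul ?_)
    have := Nat.le_mul_of_pos_left n hpos
    rw [Nat.mul_succ]
    omega
  refine ((hasCesaroLimit_iff_isLittleO.1 (h r (mem_range.1 hr))).comp_tendsto hcount).trans_le
    fun n ↦ ?_
  simpa only [Function.comp_apply, Real.norm_natCast, Nat.cast_le] using hle n

theorem HasCesaroLimit.isBigO_sum_abs {x : ℕ → ℝ} {S : ℝ}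
    (h : HasCesaroLimit (fun i ↦ x i ^ 2) S) :
    (fun n ↦ ∑ i ∈ range n, |x i|) =O[atTop] fun n : ℕ ↦ (n : ℝ) := by
  refine IsBigO.trans (.of_bound' (.of_forall fun n ↦ ?_)) ((isBigO_refl _ _).add h.isBigO_sum)
  have hterm (i : ℕ) : |x i| ≤ 1 + x i ^ 2 := by
    nlinarith [sq_abs (x i), sq_nonneg (|x i| - 1)]
  calc ‖∑ i ∈ range n, |x i|‖ = ∑ i ∈ range n, |x i| :=
        Real.norm_of_nonneg (sum_nonneg fun i _ ↦ abs_nonneg _)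
    _ ≤ ∑ i ∈ range n, (1 + x i ^ 2) := sum_le_sum fun i _ ↦ hterm i
    _ = n + ∑ i ∈ range n, x i ^ 2 := by simp only [sum_add_distrib, sum_const, card_range,
          nsmul_eq_mul, mul_one]
    _ ≤ ‖n + ∑ i ∈ range n, x i ^ 2‖ := le_abs_self _

end CesaroLimit

section StrongLaw

variable {Ω : Type*} [MeasurableSpace Ω] {μ : Measure Ω}

theorem strong_law_ae_of_indepFun_of_add_lt {E : Type*} [NormedAddCommGroup E] [NormedSpace ℝ E]
    [CompleteSpace E] [MeasurableSpace E] [BorelSpace E] (X : ℕ → Ω → E) (d : ℕ)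
    (hint : Integrable (X 0) μ) (hindep : ∀ i j, i + d < j → IndepFun (X i) (X j) μ)
    (hident : ∀ i, IdentDistrib (X i) (X 0) μ μ) :
    ∀ᵐ ω ∂μ, HasCesaroLimit (fun i ↦ X i ω) μ[X 0] := by
  have hres : ∀ r : ℕ, ∀ᵐ ω ∂μ, HasCesaroLimit (fun m ↦ X ((d + 1) * m + r) ω) μ[X 0] := by
    intro r
    have hlt : ∀ m m', m < m' → (d + 1) * m + r + d < (d + 1) * m' + r := fun m m' hm ↦ by
      have := Nat.mul_le_mul_left (d + 1) (Nat.succ_le_of_lt hm)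
      rw [Nat.mul_succ] at this
      omega
    have hpair : Pairwise fun m m' ↦
        IndepFun (X ((d + 1) * m + r)) (X ((d + 1) * m' + r)) μ := fun m m' hne ↦
      hne.lt_or_gt.elim (fun h ↦ hindep _ _ (hlt m m' h)) fun h ↦ (hindep _ _ (hlt m' m h)).symm
    rw [← (hident ((d + 1) * 0 + r)).integral_eq]
    exact strong_law_ae (fun m ↦ X ((d + 1) * m + r)) ((hident _).integrable_iff.2 hint) hpair
      fun m ↦ (hident _).trans (hident _).symm
  filter_upwards [ae_all_iff.2 hres] with ω hω
  exact .of_residues d.succ_ne_zero fun r _ ↦ hω r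

variable {U : ℕ → Ω → ℝ} (hindep : iIndepFun U μ) (hident : ∀ i, IdentDistrib (U i) (U 0) μ μ)
include hindep hident

theorem ae_hasCesaroLimit_sq (hU : MemLp (U 0) 2 μ) :
    ∀ᵐ ω ∂μ, HasCesaroLimit (fun i ↦ U i ω ^ 2) (∫ ω, U 0 ω ^ 2 ∂μ) := by
  have hsq : Measurable fun x : ℝ ↦ x ^ 2 := by fun_prop
  exact strong_law_ae_of_indepFun_of_add_lt (fun i ω ↦ U i ω ^ 2) 0 hU.integrable_sq
    (fun i j hij ↦ (hindep.indepFun (by omega)).comp hsq hsq) fun i ↦ (hident i).sq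

theorem ae_hasCesaroLimit_mul_add {k : ℕ} (hk : k ≠ 0) (hU : Integrable (U 0) μ) :
    ∀ᵐ ω ∂μ, HasCesaroLimit (fun i ↦ U i ω * U (i + k) ω) ((∫ ω, U 0 ω ∂μ) ^ 2) := by
  have := hindep.isProbabilityMeasure
  have hmul : Measurable fun z : ℝ × ℝ ↦ z.1 * z.2 := by fun_prop
  have hlag (i : ℕ) : IndepFun (U i) (U (i + k)) μ := hindep.indepFun (by omega)
  have hmeas (i : ℕ) : AEMeasurable (U i) μ := (hident i).aemeasurable_fst
  have hUi (i : ℕ) : Integrable (U i) μ := (hident i).integrable_iff.2 hU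
  have hmean : ∫ ω, U 0 ω * U (0 + k) ω ∂μ = (∫ ω, U 0 ω ∂μ) ^ 2 := by
    rw [(hlag 0).integral_fun_mul_eq_mul_integral (hUi _).1 (hUi _).1, (hident (0 + k)).integral_eq,
      sq]
  rw [← hmean]
  refine strong_law_ae_of_indepFun_of_add_lt (fun i ω ↦ U i ω * U (i + k) ω) k
    ((hlag 0).integrable_mul (hUi _) (hUi _)) (fun i j hij ↦ ?_) fun i ↦ ?_
  · exact (hindep.indepFun_prodMk_prodMk₀ hmeas i (i + k) j (j + k) (by omega) (by omega)
      (by omega) (by omega)).comp hmul hmul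
  · exact ((hident i).prodMk ((hident (i + k)).trans (hident (0 + k)).symm) (hlag i) (hlag 0)).comp
      hmul

end StrongLaw

section Recursion

theorem isLittleO_natCast_of_contraction {ι E : Type*} [NormedAddCommGroup E] [NormedSpace ℝ E]
    {D : ι → ℕ → E} {next : ι → ι} {r B : ℝ} (hr : |r| < 1)
    (hbound : ∀ k, IsBigOWith B atTop (D k) fun n : ℕ ↦ (n : ℝ))
    (hstep : ∀ k, (fun n ↦ D k (n + 1) - r • D (next k) n) =o[atTop] fun n : ℕ ↦ (n : ℝ)) (k : ι) :
    D k =o[atTop] fun n : ℕ ↦ (n : ℝ) := by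
  obtain ⟨s, hrs, hs⟩ := exists_between hr
  have hs0 : 0 < s := (abs_nonneg r).trans_lt hrs
  have improve : ∀ C > 0, (∀ k, IsBigOWith C atTop (D k) fun n : ℕ ↦ (n : ℝ)) →
      ∀ k, IsBigOWith (s * C) atTop (D k) fun n : ℕ ↦ (n : ℝ) := by
    intro C hC h k
    have hsucc : IsBigOWith (s * C) atTop (fun n ↦ D k (n + 1)) fun n : ℕ ↦ (n : ℝ) := by
      simpa only [add_sub_cancel] using ((h (next k)).const_smul_left r).add_isLittleO (hstep k)
        (mul_lt_mul_of_pos_right hrs hC)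
    rw [← map_add_atTop_eq_nat 1, isBigOWith_map]
    refine hsucc.trans_le (fun n ↦ ?_) (by positivity)
    simp only [Function.comp_apply, Real.norm_natCast, Nat.cast_le, n.le_succ]
  have hpow : ∀ m k, IsBigOWith (s ^ m * max B 1) atTop (D k) fun n : ℕ ↦ (n : ℝ) := by
    intro m
    induction m with
    | zero => exact fun k ↦ (hbound k).weaken (by simp)
    | succ m ih => simpa only [pow_succ', mul_assoc] using improve _ (by positivity) ih
  refine isLittleO_iff_forall_isBigOWith.2 fun δ hδ ↦ ?_
  obtain ⟨m, hm⟩ := exists_pow_lt_of_lt_one (div_pos hδ (by positivity : 0 < max B 1)) hs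
  exact (hpow m k).weaken ((lt_div_iff₀ (by positivity)).1 hm).le

theorem mul_add_sq_le {r : ℝ} (hr : |r| < 1) (x y : ℝ) :
    (r * x + y) ^ 2 ≤ |r| * x ^ 2 + y ^ 2 / (1 - |r|) := by
  have hpos : 0 < 1 - |r| := sub_pos.2 hr
  calc (r * x + y) ^ 2 = |r * x + y| ^ 2 := (sq_abs _).symm
    _ ≤ (|r| * |x| + |y|) ^ 2 := by
        gcongr
        exact (abs_add_le _ _).trans_eq (by rw [abs_mul])
    _ = |r| * |x| ^ 2 + |y| ^ 2 / (1 - |r|) - |r| * ((1 - |r|) * |x| - |y|) ^ 2 / (1 - |r|) := by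
        field_simp
        ring
    _ ≤ |r| * |x| ^ 2 + |y| ^ 2 / (1 - |r|) := sub_le_self _ (by positivity)
    _ = |r| * x ^ 2 + y ^ 2 / (1 - |r|) := by rw [sq_abs, sq_abs]

theorem mul_sum_range_le_of_le_mul_add {x y : ℕ → ℝ} {r : ℝ} (hx : ∀ i, 0 ≤ x i)
    (h : ∀ i, x (i + 1) ≤ r * x i + y i) (n : ℕ) :
    (1 - r) * ∑ i ∈ range n, x i ≤ x 0 + ∑ i ∈ range n, y i := by
  have hle : ∑ i ∈ range n, x i ≤ ∑ i ∈ range n, x (i + 1) + x 0 := by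
    rw [← sum_range_succ', sum_range_succ]
    exact le_add_of_nonneg_right (hx n)
  have hstep := sum_le_sum fun i (_ : i ∈ range n) ↦ h i
  rw [sum_add_distrib, ← mul_sum] at hstep
  linarith

variable {φ S : ℝ} {e w : ℕ → ℝ} (he : ∀ i, e (i + 1) = φ * e i + w i)
include he

theorem isBigO_sum_sq_of_ar_one (hφ : |φ| < 1) (hsq : HasCesaroLimit (fun i ↦ w i ^ 2) S) :
    (fun n ↦ ∑ i ∈ range n, e i ^ 2) =O[atTop] fun n : ℕ ↦ (n : ℝ) := by
  have hpos : 0 < 1 - |φ| := sub_pos.2 hφ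
  have hsum := mul_sum_range_le_of_le_mul_add (x := fun i ↦ e i ^ 2) (fun i ↦ sq_nonneg (e i))
    fun i ↦ (he i) ▸ mul_add_sq_le hφ (e i) (w i)
  simp only [← sum_div] at hsum
  have hrhs : (fun n ↦ e 0 ^ 2 + (∑ i ∈ range n, w i ^ 2) / (1 - |φ|)) =O[atTop]
      fun n : ℕ ↦ (n : ℝ) := by
    simp only [div_eq_inv_mul]
    exact (isLittleO_const_natCast _).isBigO.add (hsq.isBigO_sum.const_mul_left _)
  refine IsBigO.trans (.of_bound (1 - |φ|)⁻¹ (.of_forall fun n ↦ ?_)) hrhs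
  rw [Real.norm_of_nonneg (sum_nonneg fun i _ ↦ sq_nonneg _), ← div_eq_inv_mul,
    le_div_iff₀ hpos, mul_comm]
  exact (hsum n).trans (le_abs_self _)

theorem exists_isBigOWith_sum_lag_mul_of_ar_one (hφ : |φ| < 1)
    (hsq : HasCesaroLimit (fun i ↦ w i ^ 2) S) :
    ∃ B : ℝ, ∀ k, IsBigOWith B atTop (fun n ↦ ∑ i ∈ range n, w (i + k) * e i)
      fun n : ℕ ↦ (n : ℝ) := by
  obtain ⟨A, hA⟩ := (isBigO_sum_sq_of_ar_one he hφ hsq).isBigOWith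
  refine ⟨1 * (|S| + 1 + A), fun k ↦ ?_⟩
  have hw := (hsq.comp_add_right k).isBigOWith_sum (lt_add_one |S|)
  refine IsBigOWith.trans (.of_bound (.of_forall fun n ↦ ?_)) (hw.add hA) zero_le_one
  have hterm (i : ℕ) : ‖w (i + k) * e i‖ ≤ w (i + k) ^ 2 + e i ^ 2 := by
    rw [Real.norm_eq_abs, abs_le]
    constructor <;> nlinarith [sq_nonneg (w (i + k) + e i), sq_nonneg (w (i + k) - e i)]
  rw [one_mul, ← sum_add_distrib]
  exact (norm_sum_le_of_le _ fun i _ ↦ hterm i).trans (le_abs_self _)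

theorem sum_range_succ_lag_mul_of_ar_one (k n : ℕ) :
    ∑ i ∈ range (n + 1), w (i + k) * e i = φ * ∑ i ∈ range n, w (i + (k + 1)) * e i +
      (∑ i ∈ range n, w i * w (i + (k + 1)) + w k * e 0) := by
  rw [sum_range_succ', zero_add, mul_sum, ← add_assoc, ← sum_add_distrib]
  congr 1
  refine sum_congr rfl fun i _ ↦ ?_
  rw [he, show i + 1 + k = i + (k + 1) by ring]
  ring

theorem sum_range_succ_sq_of_ar_one (n : ℕ) :
    ∑ i ∈ range (n + 1), e i ^ 2 = φ ^ 2 * ∑ i ∈ range n, e i ^ 2 +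
      (2 * φ * ∑ i ∈ range n, w i * e i + ∑ i ∈ range n, w i ^ 2 + e 0 ^ 2) := by
  rw [sum_range_succ', mul_sum, mul_sum, ← add_assoc, ← add_assoc, ← sum_add_distrib,
    ← sum_add_distrib]
  congr 1
  refine sum_congr rfl fun i _ ↦ ?_
  rw [he]
  ring

variable (hφ : |φ| < 1) (hsq : HasCesaroLimit (fun i ↦ w i ^ 2) S)
  (hlag : ∀ k ≠ 0, HasCesaroLimit (fun i ↦ w i * w (i + k)) 0)
include hφ hsq hlag

theorem hasCesaroLimit_mul_of_ar_one : HasCesaroLimit (fun i ↦ w i * e i) 0 := by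
  obtain ⟨B, hB⟩ := exists_isBigOWith_sum_lag_mul_of_ar_one he hφ hsq
  refine hasCesaroLimit_zero_iff_isLittleO.2 <|
    isLittleO_natCast_of_contraction (next := Nat.succ) hφ hB (fun k ↦ ?_) 0
  simp only [sum_range_succ_lag_mul_of_ar_one he, smul_eq_mul, Nat.succ_eq_add_one,
    add_sub_cancel_left]
  exact (hasCesaroLimit_zero_iff_isLittleO.1 (hlag _ k.succ_ne_zero)).add
    (isLittleO_const_natCast _)

theorem hasCesaroLimit_sq_of_ar_one : HasCesaroLimit (fun i ↦ e i ^ 2) (S / (1 - φ ^ 2)) := by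
  have hφ2 : |φ ^ 2| < 1 := by
    rw [abs_pow]
    exact pow_lt_one₀ (abs_nonneg φ) hφ two_ne_zero
  have hne : 1 - φ ^ 2 ≠ 0 := (sub_pos.2 (abs_lt.1 hφ2).2).ne'
  set R := S / (1 - φ ^ 2) with hR
  have hS : R - φ ^ 2 * R = S := by rw [hR]; field_simp
  have hlin : (fun n : ℕ ↦ (n : ℝ) * R) =O[atTop] fun n : ℕ ↦ (n : ℝ) := by
    simpa only [mul_comm] using isBigO_const_mul_self R (fun n : ℕ ↦ (n : ℝ)) atTop
  obtain ⟨B, hB⟩ := ((isBigO_sum_sq_of_ar_one he hφ hsq).sub hlin).isBigOWith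
  refine tendsto_inv_smul_iff_isLittleO.2 <|
    isLittleO_natCast_of_contraction (ι := Unit) (next := id) hφ2 (fun _ ↦ hB) (fun _ ↦ ?_) ()
  have hcross := hasCesaroLimit_zero_iff_isLittleO.1 (hasCesaroLimit_mul_of_ar_one he hφ hsq hlag)
  refine ((hcross.const_mul_left (2 * φ)).add ((tendsto_inv_smul_iff_isLittleO.1 hsq).add
    (isLittleO_const_natCast (e 0 ^ 2 - R)))).congr_left fun n ↦ ?_
  rw [sum_range_succ_sq_of_ar_one he]
  simp only [smul_eq_mul, Nat.cast_add, Nat.cast_one]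
  linear_combination (n : ℝ) * hS

theorem hasCesaroLimit_mul_succ_of_ar_one :
    HasCesaroLimit (fun i ↦ e (i + 1) * e i) (φ * S / (1 - φ ^ 2)) := by
  have hsum := (Tendsto.const_mul φ (hasCesaroLimit_sq_of_ar_one he hφ hsq hlag)).add
    (hasCesaroLimit_mul_of_ar_one he hφ hsq hlag)
  rw [add_zero, ← mul_div_assoc] at hsum
  refine hsum.congr fun n ↦ ?_
  rw [smul_eq_mul, smul_eq_mul, smul_eq_mul, mul_left_comm, ← mul_add, mul_sum, ← sum_add_distrib]
  refine congrArg _ (sum_congr rfl fun i _ ↦ ?_)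
  simp only [he]
  ring

end Recursion

section Perturbation

variable {b c : ℕ → ℕ → ℝ} (hb : ∀ η > 0, ∀ᶠ n in atTop, ∀ i < n, |b n i| ≤ η)
include hb

theorem isLittleO_sum_mul_of_uniform {z : ℕ → ℕ → ℝ}
    (hz : (fun n ↦ ∑ i ∈ range n, |z n i|) =O[atTop] fun n : ℕ ↦ (n : ℝ)) :
    (fun n ↦ ∑ i ∈ range n, b n i * z n i) =o[atTop] fun n : ℕ ↦ (n : ℝ) := by
  refine IsLittleO.trans_isBigO (isLittleO_iff.2 fun η hη ↦ ?_) hz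
  filter_upwards [hb η hη] with n hn
  rw [Real.norm_of_nonneg (sum_nonneg fun i _ ↦ abs_nonneg (z n i)), mul_sum]
  refine norm_sum_le_of_le _ fun i hi ↦ ?_
  rw [norm_mul]
  exact mul_le_mul_of_nonneg_right (hn i (mem_range.1 hi)) (abs_nonneg _)

theorem isBigO_sum_abs_of_uniform :
    (fun n ↦ ∑ i ∈ range n, |b n i|) =O[atTop] fun n : ℕ ↦ (n : ℝ) := by
  refine .of_bound' ?_
  filter_upwards [hb 1 one_pos] with n hn
  rw [Real.norm_of_nonneg (sum_nonneg fun i _ ↦ abs_nonneg (b n i)), Real.norm_natCast]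
  simpa using sum_le_card_nsmul (range n) _ 1 fun i hi ↦ hn i (mem_range.1 hi)

theorem HasCesaroLimit.tendsto_perturbed_mul {x y : ℕ → ℝ} {L : ℝ}
    (hc : ∀ η > 0, ∀ᶠ n in atTop, ∀ i < n, |c n i| ≤ η)
    (hxy : HasCesaroLimit (fun i ↦ x i * y i) L)
    (hx : (fun n ↦ ∑ i ∈ range n, |x i|) =O[atTop] fun n : ℕ ↦ (n : ℝ))
    (hy : (fun n ↦ ∑ i ∈ range n, |y i|) =O[atTop] fun n : ℕ ↦ (n : ℝ)) :
    Tendsto (fun n : ℕ ↦ (n : ℝ)⁻¹ • ∑ i ∈ range n, (x i + b n i) * (y i + c n i)) atTop (𝓝 L) := by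
  refine tendsto_inv_smul_iff_isLittleO.2 ?_
  refine ((((tendsto_inv_smul_iff_isLittleO.1 hxy).add (isLittleO_sum_mul_of_uniform hb hy)).add
    (isLittleO_sum_mul_of_uniform hc hx)).add
    (isLittleO_sum_mul_of_uniform hb (isBigO_sum_abs_of_uniform hc))).congr_left fun n ↦ ?_
  have hexpand (i : ℕ) : (x i + b n i) * (y i + c n i) =
      x i * y i + b n i * y i + c n i * x i + b n i * c n i := by ring
  simp only [hexpand, sum_add_distrib]
  ring

end Perturbation

theorem HasCesaroLimit.tendsto_perturbed_lag_one {x : ℕ → ℝ} {a : ℕ → ℕ → ℝ} {L R : ℝ}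
    (hmul : HasCesaroLimit (fun i ↦ x (i + 1) * x i) L) (hsq : HasCesaroLimit (fun i ↦ x i ^ 2) R)
    (ha : ∀ η > 0, ∃ N : ℕ, ∀ n ≥ N, ∀ i ∈ Finset.Icc 1 n, |a n i| < η) :
    Tendsto (fun n : ℕ ↦
        1 / (n : ℝ) * ∑ i ∈ Finset.Icc 2 n, (x i + a n i) * (x (i - 1) + a n (i - 1)))
      atTop (𝓝 L) := by
  have hnull {k : ℕ} (hk : ∀ n i, i < n → i + k ∈ Finset.Icc 1 (n + 1)) :
      ∀ η > 0, ∀ᶠ n in atTop, ∀ i < n, |a (n + 1) (i + k)| ≤ η := by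
    intro η hη
    obtain ⟨N, hN⟩ := ha η hη
    filter_upwards [eventually_ge_atTop N] with n hn i hi
    exact (hN (n + 1) (by omega) (i + k) (hk n i hi)).le
  have hlim := (hmul.comp_add_right 1).tendsto_perturbed_mul
    (hnull (k := 2) fun n i hi ↦ Finset.mem_Icc.2 (by omega))
    (hnull (k := 1) fun n i hi ↦ Finset.mem_Icc.2 (by omega))
    (hsq.comp_add_right 2).isBigO_sum_abs (hsq.comp_add_right 1).isBigO_sum_abs
  have hscaled := (tendsto_natCast_div_add_atTop (1 : ℝ)).mul hlim
  rw [one_mul] at hscaled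
  refine (tendsto_add_atTop_iff_nat 1).1 (hscaled.congr' ?_)
  filter_upwards [eventually_ne_atTop 0] with n hn
  rw [smul_eq_mul, div_mul_eq_mul_div, mul_inv_cancel_left₀ (Nat.cast_ne_zero.2 hn), Nat.cast_succ,
    one_div_mul_eq_div, ← Finset.Ico_add_one_right_eq_Icc, sum_Ico_eq_sum_range]
  simp only [Nat.reduceSubDiff, add_comm 2, Nat.add_one_sub_one]

theorem eq_mul_add_of_hasSum_pow_mul_s14 {R : Type*} [Ring R] [TopologicalSpace R]
    [IsTopologicalRing R] [T2Space R] {φ : R} {u x : ℤ → R}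
    (h : ∀ i, HasSum (fun j : ℕ ↦ φ ^ j * u (i - j)) (x i)) (i : ℤ) :
    x i = φ * x (i - 1) + u i := by
  have hshift (j : ℕ) : φ * (φ ^ j * u (i - 1 - j)) = φ ^ (j + 1) * u (i - (j + 1 : ℕ)) := by
    rw [pow_succ', mul_assoc, Nat.cast_succ, add_comm (j : ℤ), sub_sub]
  have htail := (h (i - 1)).mul_left φ
  simp only [hshift] at htail
  simpa [add_comm] using (h i).unique htail.zero_add

theorem stmt14_general {Ω : Type*} [MeasurableSpace Ω] (μ : Measure Ω) (U : ℤ → Ω → ℝ)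
    (hindep : iIndepFun U μ) (hident : ∀ j, IdentDistrib (U j) (U 0) μ μ)
    (hL2 : MemLp (U 0) 2 μ) (hmean : ∫ ω, U 0 ω ∂μ = 0) (φ : ℝ) (hφ : |φ| < 1) (ε : ℤ → Ω → ℝ)
    (hε : ∀ᵐ ω ∂μ, ∀ i, ε i ω = φ * ε (i - 1) ω + U i ω) (a : ℕ → ℕ → Ω → ℝ)
    (ha : ∀ᵐ ω ∂μ, ∀ η > (0 : ℝ), ∃ N : ℕ, ∀ n ≥ N, ∀ i ∈ Finset.Icc 1 n, |a n i ω| < η) :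
    ∀ᵐ ω ∂μ, Tendsto (fun n : ℕ ↦ 1 / (n : ℝ) * ∑ i ∈ Finset.Icc 2 n,
        (ε i ω + a n i ω) * (ε (i - 1) ω + a n (i - 1) ω))
      atTop (𝓝 (φ * (∫ ω, U 0 ω ^ 2 ∂μ) / (1 - φ ^ 2))) := by
  have := hindep.isProbabilityMeasure
  let V (i : ℕ) : Ω → ℝ := U (i + 1)
  have hVindep : iIndepFun V μ :=
    hindep.precomp (g := fun i : ℕ ↦ (i : ℤ) + 1) fun i j hij ↦ by simpa using hij
  have hVident (i : ℕ) : IdentDistrib (V i) (V 0) μ μ := (hident _).trans (hident _).symm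
  have hV0 : IdentDistrib (V 0) (U 0) μ μ := hident _
  have hVL2 : MemLp (V 0) 2 μ := hV0.symm.memLp_snd hL2
  have hVmean : ∫ ω, V 0 ω ∂μ = 0 := hV0.integral_eq.trans hmean
  have hlag : ∀ᵐ ω ∂μ, ∀ k ≠ 0, HasCesaroLimit (fun i ↦ V i ω * V (i + k) ω) 0 := by
    refine ae_all_iff.2 fun k ↦ ae_all_iff.2 fun hk ↦ ?_
    simpa [hVmean] using ae_hasCesaroLimit_mul_add hVindep hVident hk (hVL2.integrable one_le_two)
  rw [← show ∫ ω, V 0 ω ^ 2 ∂μ = ∫ ω, U 0 ω ^ 2 ∂μ from hV0.sq.integral_eq]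
  filter_upwards [hε, ha, hlag, ae_hasCesaroLimit_sq hVindep hVident hVL2] with ω hεω haω hlagω hsqω
  let e (i : ℕ) : ℝ := ε i ω
  have hrec (i : ℕ) : e (i + 1) = φ * e i + V i ω := by
    simpa only [add_sub_cancel_right, Nat.cast_succ, e, V] using hεω (i + 1)
  refine ((hasCesaroLimit_mul_succ_of_ar_one hrec hφ hsqω hlagω).tendsto_perturbed_lag_one
    (hasCesaroLimit_sq_of_ar_one hrec hφ hsqω hlagω) haω).congr fun n ↦ ?_
  refine congrArg _ (sum_congr rfl fun i hi ↦ ?_)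
  rw [show e (i - 1) = ε (i - 1) ω from congrArg (ε · ω) (Nat.cast_pred (by grind))]

/-- If the triangular array `a` satisfies `sup_{1≤i≤n} |a_{n,i}| → 0`
almost surely, then `(1/n) ∑_{i=2}^n (ε_i + a_{n,i})(ε_{i-1} + a_{n,i-1})` converges to
`φσ²/(1-φ²)` almost surely. -/
theorem stmt14
    {Ω : Type*} [MeasurableSpace Ω] (μ : Measure Ω) [IsProbabilityMeasure μ]
    (U : ℤ → Ω → ℝ) (hUmeas : ∀ j, Measurable (U j))
    (hUindep : iIndepFun U μ)
    (hUident : ∀ j, μ.map (U j) = μ.map (U 0))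
    (σ : ℝ) (hσ : 0 < σ)
    (hUmean : ∫ ω, U 0 ω ∂μ = 0)
    (hUvar : ∫ ω, (U 0 ω) ^ 2 ∂μ = σ ^ 2)
    (hU8 : Integrable (fun ω => (U 0 ω) ^ 8) μ)
    (φ : ℝ) (hφ0 : φ ≠ 0) (hφ1 : |φ| < 1)
    (ε : ℤ → Ω → ℝ) (hεmeas : ∀ i, Measurable (ε i))
    (hεsum : ∀ᵐ ω ∂μ, ∀ i : ℤ, HasSum (fun j : ℕ => φ ^ j * U (i - (j : ℤ)) ω) (ε i ω))
    (a : ℕ → ℕ → Ω → ℝ)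
    (ha : ∀ᵐ ω ∂μ, ∀ e > (0 : ℝ), ∃ N : ℕ, ∀ n ≥ N, ∀ i ∈ Finset.Icc 1 n, |a n i ω| < e) :
    ∀ᵐ ω ∂μ, Tendsto (fun n : ℕ =>
      (1 / (n : ℝ)) * ∑ i ∈ Finset.Icc 2 n,
        (ε (i : ℤ) ω + a n i ω) * (ε ((i : ℤ) - 1) ω + a n (i - 1) ω))
      atTop (𝓝 (φ * σ ^ 2 / (1 - φ ^ 2))) := by
  have hL2 : MemLp (U 0) 2 μ := (memLp_two_iff_integrable_sq (hUmeas 0).aestronglyMeasurable).2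
    (.of_integral_ne_zero (hUvar.trans_ne (pow_pos hσ 2).ne'))
  rw [← hUvar]
  exact stmt14_general μ U hUindep
    (fun j ↦ ⟨(hUmeas j).aemeasurable, (hUmeas 0).aemeasurable, hUident j⟩) hL2 hUmean φ hφ1 ε
    (hεsum.mono fun ω ↦ eq_mul_add_of_hasSum_pow_mul_s14 (u := (U · ω))) a ha
end
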